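/- arXiv:1108.2147 — 4 statements merged into one kernel-verified Lean document; each statement's English description precedes it below -/
import Mathlib

section
/- Let f, g ∈ A(S) be p.m.p. actions of the free group F_S. Then f weakly contains g if and only if the following holds: for all m, n, k, l ≥ 1, every δ > 0, every finite set F ⊆ F_S, and all Borel partitions A : X → {1,…,k} and B : X → {1,…,l}, there exist Borel partitions C : X → {1,…,k} and D : X → {1,…,l} such that for all indices 1 ≤ r_1,…,r_m ≤ k, 1 ≤ q_1,…,q_n ≤ l and all group elements γ_1,…,γ_m ∈ F, δ_1,…,δ_n ∈ F one has |μ(⋂_{i=1}^m f_{γ_i}(C_{r_i}) ∩ ⋂_{j=1}^n f_{δ_j}(D_{q_j})) − μ(⋂_{i=1}^m g_{γ_i}(A_{r_i}) ∩ ⋂_{j=1}^n g_{δ_j}(B_{q_j}))| < δ, where A_k = A⁻¹(k) etc. -/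
open MeasureTheory

/-- A probability-measure-preserving action of a group `G` on a measure space. -/
structure PMP (G : Type*) [Group G] (X : Type*) [MeasurableSpace X] (μ : Measure X) where
  act : G → X → X
  measurable : ∀ γ, Measurable (act γ)
  preserves : ∀ γ, MeasurePreserving (act γ) μ μ
  act_one : ∀ x, act 1 x = x
  act_mul : ∀ γ₁ γ₂ x, act (γ₁ * γ₂) x = act γ₁ (act γ₂ x)

/-- `f` weakly contains `g`. -/
def WeaklyContains {G : Type*} [Group G] {X Y : Type*} [MeasurableSpace X] [MeasurableSpace Y]
    {μ : Measure X} {ν : Measure Y} (f : PMP G X μ) (g : PMP G Y ν) : Prop :=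
  ∀ n : ℕ, 1 ≤ n → ∀ C : Y → Fin n, Measurable C →
    ∀ F : Finset G, ∀ ε : ℝ, 0 < ε →
      ∃ D : X → Fin n, Measurable D ∧
        ∀ i j : Fin n, ∀ γ ∈ F,
          |(μ (f.act γ '' (D ⁻¹' {i}) ∩ D ⁻¹' {j})).toReal -
            (ν (g.act γ '' (C ⁻¹' {i}) ∩ C ⁻¹' {j})).toReal| ≤ ε

theorem abs_measure_sub_congr {X : Type*} [MeasurableSpace X] {μ : Measure X}
    {a b a' b' : Set X} (h₁ : a = a') (h₂ : b = b') :
    |(μ a).toReal - (μ b).toReal| = |(μ a').toReal - (μ b').toReal| := by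
  rw [h₁, h₂]

theorem PMP.image_eq {G : Type*} [Group G] {X : Type*} [MeasurableSpace X] {μ : Measure X}
    (f : PMP G X μ) (γ : G) (s : Set X) : f.act γ '' s = f.act γ⁻¹ ⁻¹' s := by
  ext x
  constructor
  · rintro ⟨y, hy, rfl⟩
    simpa [← f.act_mul, f.act_one] using hy
  · intro hx
    exact ⟨_, hx, by simp [← f.act_mul, f.act_one]⟩

theorem wc_fintype {G : Type*} [Group G] {X : Type*} [MeasurableSpace X] {μ : Measure X}
    {f g : PMP G X μ} (h : WeaklyContains f g) {I : Type*} [Fintype I] [Nonempty I]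
    [MeasurableSpace I] [MeasurableSingletonClass I] (C : X → I) (hC : Measurable C)
    (F : Finset G) (ε : ℝ) (hε : 0 < ε) :
    ∃ D : X → I, Measurable D ∧ ∀ i j : I, ∀ γ ∈ F,
      |μ.real {x | D (f.act γ⁻¹ x) = i ∧ D x = j} -
        μ.real {x | C (g.act γ⁻¹ x) = i ∧ C x = j}| ≤ ε := by
  let e := Fintype.equivFin I
  obtain ⟨D, hD, H⟩ := h (Fintype.card I) Fintype.card_pos (e ∘ C)
    ((measurable_of_finite e).comp hC) F ε hε
  refine ⟨e.symm ∘ D, (measurable_of_finite e.symm).comp hD, fun i j γ hγ => ?_⟩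
  have := H (e i) (e j) γ hγ
  rw [f.image_eq, g.image_eq] at this
  refine (abs_measure_sub_congr ?_ ?_).trans_le this
  · ext x; simp [Equiv.symm_apply_eq]
  · ext x; simp

theorem wc_pattern {G : Type*} [Group G] {X : Type*} [MeasurableSpace X] {μ : Measure X}
    [IsProbabilityMeasure μ]
    {f g : PMP G X μ} (h : WeaklyContains f g) {V : Type*} [Fintype V] [Nonempty V]
    [MeasurableSpace V] [MeasurableSingletonClass V] (P : X → V) (hP : Measurable P)
    (F : Finset G) (h1 : 1 ∈ F) (δ : ℝ) (hδ : 0 < δ) :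
    ∃ P' : X → V, Measurable P' ∧ ∀ T : Set (F → V),
      |μ.real {x | (fun γ : F => P' (f.act (γ : G)⁻¹ x)) ∈ T} -
        μ.real {x | (fun γ : F => P (g.act (γ : G)⁻¹ x)) ∈ T}| < δ := by
  classical
  let I := F → V
  let Q : X → I := fun x γ => P (g.act (γ : G)⁻¹ x)
  have hQ : Measurable Q := measurable_pi_lambda _ fun γ => hP.comp (g.measurable _)
  let M : ℝ := Fintype.card (F × I × I) + Fintype.card I
  have hM : 0 ≤ M := by positivity
  let ε : ℝ := δ / (M + 1)
  have hε : 0 < ε := by positivity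
  have hMε : M * ε < δ := by
    have : (M + 1) * ε = δ := by simp only [ε]; field_simp
    nlinarith
  obtain ⟨D, hD, H⟩ := wc_fintype h Q hQ F ε hε
  refine ⟨fun x => D x ⟨1, h1⟩, (measurable_pi_apply _).comp hD, fun T => ?_⟩
  -- the exceptional set
  let bad : F × I × I → Set X := fun p =>
    if p.2.1 ⟨1, h1⟩ ≠ p.2.2 p.1 then {x | D (f.act (p.1 : G)⁻¹ x) = p.2.1 ∧ D x = p.2.2} else ∅
  have hbad : ∀ p, μ.real (bad p) ≤ ε := by
    rintro ⟨γ, i, j⟩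
    by_cases hij : i ⟨1, h1⟩ ≠ j γ
    · have h0 : {x | Q (g.act (γ : G)⁻¹ x) = i ∧ Q x = j} = ∅ := by
        ext x
        simp only [Set.mem_ofPred_eq, Set.mem_empty_iff_false, iff_false]
        rintro ⟨rfl, rfl⟩
        exact hij (by simp [Q, g.act_one])
      have := H i j γ γ.2
      rw [h0] at this
      simp only [measureReal_empty, sub_zero] at this
      simp only [bad, if_pos hij]
      exact (le_abs_self _).trans this
    · simp only [bad, if_neg hij]
      simpa using hε.le
  have hB : μ.real (⋃ p, bad p) ≤ Fintype.card (F × I × I) * ε := by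
    refine (measureReal_iUnion_fintype_le _).trans ?_
    refine (Finset.sum_le_sum fun p _ => hbad p).trans ?_
    simp
  have hgood : ∀ x, x ∉ (⋃ p, bad p) → (fun γ : F => D (f.act (γ : G)⁻¹ x) ⟨1, h1⟩) = D x := by
    intro x hx
    funext γ
    by_contra hne
    refine hx (Set.mem_iUnion.2 ⟨(γ, D (f.act (γ : G)⁻¹ x), D x), ?_⟩)
    simp only [bad]
    rw [if_pos hne]
    exact ⟨rfl, rfl⟩
  set U : Set X := {x | (fun γ : F => D (f.act (γ : G)⁻¹ x) ⟨1, h1⟩) ∈ T} with hU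
  have hUD : |μ.real U - μ.real (D ⁻¹' T)| ≤ μ.real (⋃ p, bad p) := by
    have a1 : μ.real U ≤ μ.real (D ⁻¹' T) + μ.real (⋃ p, bad p) := by
      refine (measureReal_mono ?_).trans (measureReal_union_le _ _)
      intro x hx
      by_cases hb : x ∈ ⋃ p, bad p
      · exact Or.inr hb
      · left
        have := hgood x hb
        simp only [hU, Set.mem_ofPred_eq, this] at hx
        exact hx
    have a2 : μ.real (D ⁻¹' T) ≤ μ.real U + μ.real (⋃ p, bad p) := by
      refine (measureReal_mono ?_).trans (measureReal_union_le _ _)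
      intro x hx
      by_cases hb : x ∈ ⋃ p, bad p
      · exact Or.inr hb
      · left
        have := hgood x hb
        simp only [hU, Set.mem_ofPred_eq, this]
        exact hx
    rw [abs_le]; constructor <;> linarith
  have hsum : ∀ E : X → I, Measurable E →
      μ.real (E ⁻¹' T) = ∑ j ∈ T.toFinset, μ.real (E ⁻¹' {j}) := by
    intro E hE
    rw [sum_measureReal_preimage_singleton _ fun j _ => hE (measurableSet_singleton j)]
    simp
  have hDQ : |μ.real (D ⁻¹' T) - μ.real (Q ⁻¹' T)| ≤ Fintype.card I * ε := by
    rw [hsum D hD, hsum Q hQ, ← Finset.sum_sub_distrib]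
    refine (Finset.abs_sum_le_sum_abs _ _).trans ?_
    have : ∀ j ∈ T.toFinset, |μ.real (D ⁻¹' {j}) - μ.real (Q ⁻¹' {j})| ≤ ε := by
      intro j _
      have := H j j 1 h1
      simp only [inv_one, f.act_one, g.act_one, and_self] at this
      exact this
    refine (Finset.sum_le_sum this).trans ?_
    rw [Finset.sum_const, nsmul_eq_mul]
    gcongr
    exact Finset.card_le_univ _
  change |μ.real U - μ.real (Q ⁻¹' T)| < δ
  calc _ ≤ |μ.real U - μ.real (D ⁻¹' T)| + |μ.real (D ⁻¹' T) - μ.real (Q ⁻¹' T)| :=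
        abs_sub_le _ _ _
    _ ≤ M * ε := by simp only [M]; linarith
    _ < δ := hMε

theorem weaklyContains_iff_higher_simulation
    {S X : Type} [Fintype S] [MeasurableSpace X] [StandardBorelSpace X]
    {μ : Measure X} [IsProbabilityMeasure μ]
    (f g : PMP (FreeGroup S) X μ) :
    WeaklyContains f g ↔
      ∀ m n k l : ℕ, 1 ≤ m → 1 ≤ n → 1 ≤ k → 1 ≤ l →
        ∀ δ : ℝ, 0 < δ → ∀ F : Finset (FreeGroup S),
          ∀ A : X → Fin k, ∀ B : X → Fin l, Measurable A → Measurable B →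
            ∃ C : X → Fin k, ∃ D : X → Fin l, Measurable C ∧ Measurable D ∧
              ∀ (r : Fin m → Fin k) (q : Fin n → Fin l)
                (γ : Fin m → FreeGroup S) (η : Fin n → FreeGroup S),
                (∀ i, γ i ∈ F) → (∀ j, η j ∈ F) →
                |(μ ((⋂ i, f.act (γ i) '' (C ⁻¹' {r i})) ∩
                      ⋂ j, f.act (η j) '' (D ⁻¹' {q j}))).toReal -
                  (μ ((⋂ i, g.act (γ i) '' (A ⁻¹' {r i})) ∩
                      ⋂ j, g.act (η j) '' (B ⁻¹' {q j}))).toReal| < δ := by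
  constructor
  · intro h m n k l hm hn hk hl δ hδ F A B hA hB
    classical
    have : Nonempty (Fin k) := ⟨⟨0, hk⟩⟩
    have : Nonempty (Fin l) := ⟨⟨0, hl⟩⟩
    obtain ⟨P, hP, H⟩ := wc_pattern h (fun x => (A x, B x)) (hA.prodMk hB) (insert 1 F)
      (Finset.mem_insert_self _ _) δ hδ
    refine ⟨fun x => (P x).1, fun x => (P x).2, hP.fst, hP.snd, ?_⟩
    intro r q γ η hγ hη
    have := H {w | (∀ i, (w ⟨γ i, Finset.mem_insert_of_mem (hγ i)⟩).1 = r i) ∧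
      ∀ j, (w ⟨η j, Finset.mem_insert_of_mem (hη j)⟩).2 = q j}
    simp only [PMP.image_eq]
    refine (abs_measure_sub_congr ?_ ?_).trans_lt this
    · ext x; simp
    · ext x; simp
  · intro h n hn C hC F ε hε
    classical
    obtain ⟨D, E, hD, hE, H⟩ := h 2 1 n 1 (by norm_num) le_rfl hn le_rfl ε hε (insert 1 F) C
      (fun _ => 0) hC measurable_const
    refine ⟨D, hD, fun i j γ hγ => ?_⟩
    have := (H ![i, j] ![0] ![γ, 1] ![1]
      (by intro a; fin_cases a <;> simp [hγ]) (by intro a; fin_cases a; simp)).le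
    simp only [PMP.image_eq] at this ⊢
    refine (abs_measure_sub_congr ?_ ?_).trans_le this
    · ext x; simp only [Set.mem_inter_iff, Set.mem_iInter, Set.mem_preimage]; simp [Fin.forall_fin_two, f.act_one, eq_iff_true_of_subsingleton]
    · ext x; simp only [Set.mem_inter_iff, Set.mem_iInter, Set.mem_preimage]; simp [Fin.forall_fin_two, g.act_one]
end

section
/- Let f ∈ A(S) be a p.m.p. action of the free group F_S, let r > 0 be an integer and δ > 0. Then there exists a finite Borel partition X = L_1 ∪ ⋯ ∪ L_n ∪ E such that: (1) μ(E) < δ; (2) for each i there is an equivalence relation P_i on the set W^{r,S} of reduced words of length at most r in F_S such that for every x ∈ L_i and all w_1, w_2 ∈ W^{r,S}, f_{w_1}(x) = f_{w_2}(x) if and only if w_1 P_i w_2; and (3) for each i and all w_1, w_2 ∈ W^{r,S} with w_1 not P_i-equivalent to w_2, the sets f_{w_1}(L_i) and f_{w_2}(L_i) are disjoint (up to null sets). -/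
open MeasureTheory

/-- The set `W^{r,S}` of reduced words of length at most `r` in the free group on `S`. -/
def Wball (S : Type) [DecidableEq S] (r : ℕ) : Set (FreeGroup S) := {w | FreeGroup.norm w ≤ r}

theorem wball_finite (S : Type) [Fintype S] [DecidableEq S] (r : ℕ) : Finite (Wball S r) := by
  have h : {l : List (S × Bool) | l.length ≤ r}.Finite := List.finite_length_le _ r
  have h2 := h.preimage (f := FreeGroup.toWord (α := S)) FreeGroup.toWord_injective.injOn
  exact h2.to_subtype

/-- The bad set: two distinct images carry the same label. -/
def badSet {W X : Type} (a : W → X → X) (g : X → ℕ → Bool) (N : ℕ) : Set X :=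
  ⋃ w₁ : W, ⋃ w₂ : W, {x | a w₁ x = a w₂ x}ᶜ ∩ ⋂ k : Fin N, {x | g (a w₁ x) k = g (a w₂ x) k}

/-- The type of a point. -/
def cellMap {W X : Type} (a : W → X → X) (g : X → ℕ → Bool) (N : ℕ) (x : X) :
    (W → W → Prop) × (W → Fin N → Bool) :=
  (fun w₁ w₂ => a w₁ x = a w₂ x, fun w k => g (a w x) k)

theorem exists_partition_with_types
    {S X : Type} [Fintype S] [DecidableEq S] [MeasurableSpace X] [StandardBorelSpace X]
    {μ : Measure X} [IsProbabilityMeasure μ]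
    (f : PMP (FreeGroup S) X μ) (r : ℕ) (hr : 0 < r) (δ : ℝ) (hδ : 0 < δ) :
    ∃ (n : ℕ) (L : Fin n → Set X) (E : Set X),
      (∀ i, MeasurableSet (L i)) ∧ MeasurableSet E ∧
      (∀ i j, i ≠ j → Disjoint (L i) (L j)) ∧ (∀ i, Disjoint (L i) E) ∧
      ((⋃ i, L i) ∪ E = Set.univ) ∧
      (μ E).toReal < δ ∧
      ∀ i : Fin n, ∃ P : Wball S r → Wball S r → Prop,
        Equivalence P ∧
        (∀ x ∈ L i, ∀ w₁ w₂ : Wball S r,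
          (f.act ↑w₁ x = f.act ↑w₂ x ↔ P w₁ w₂)) ∧
        (∀ w₁ w₂ : Wball S r, ¬ P w₁ w₂ →
          μ (f.act ↑w₁ '' L i ∩ f.act ↑w₂ '' L i) = 0) := by
  classical
  have hW : Finite (Wball S r) := wball_finite S r
  obtain ⟨g, hg, ginj⟩ := MeasurableSpace.measurable_injection_nat_bool_of_countablySeparated X
  let a : Wball S r → X → X := fun w => f.act ↑w
  have ha : ∀ w, Measurable (a w) := fun w => f.measurable _
  have heq : ∀ w₁ w₂, MeasurableSet {x | a w₁ x = a w₂ x} := fun w₁ w₂ =>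
    measurableSet_eq_fun (ha w₁) (ha w₂)
  have hgk : ∀ w k, Measurable (fun x => g (a w x) k) := fun w k =>
    (measurable_pi_apply k).comp (hg.comp (ha w))
  have hbad : ∀ N, MeasurableSet (badSet a g N) := fun N =>
    MeasurableSet.iUnion fun w₁ => MeasurableSet.iUnion fun w₂ =>
      (heq w₁ w₂).compl.inter (MeasurableSet.iInter fun k =>
        measurableSet_eq_fun (hgk w₁ k) (hgk w₂ k))
  have hmem : ∀ N x, x ∈ badSet a g N ↔
      ∃ w₁ w₂, a w₁ x ≠ a w₂ x ∧ ∀ k : Fin N, g (a w₁ x) k = g (a w₂ x) k := by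
    intro N x; simp [badSet]
  have hanti : Antitone (badSet a g) := by
    intro M N hMN x hx
    rw [hmem] at hx ⊢
    obtain ⟨w₁, w₂, h1, h2⟩ := hx
    exact ⟨w₁, w₂, h1, fun k => h2 ⟨k, k.2.trans_le hMN⟩⟩
  have hempty : ⋂ N, badSet a g N = ∅ := by
    rw [Set.eq_empty_iff_forall_notMem]
    intro x hx
    rw [Set.mem_iInter] at hx
    have hk : ∀ w₁ w₂, ∃ N : ℕ, a w₁ x ≠ a w₂ x → g (a w₁ x) N ≠ g (a w₂ x) N := by
      intro w₁ w₂
      by_cases h : a w₁ x = a w₂ x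
      · exact ⟨0, fun h' => absurd h h'⟩
      · obtain ⟨k, hk⟩ := Function.ne_iff.1 (ginj.ne h)
        exact ⟨k, fun _ => hk⟩
    choose K hK using hk
    obtain ⟨B, hB⟩ := (Set.finite_range (fun p : Wball S r × Wball S r => K p.1 p.2)).bddAbove
    obtain ⟨w₁, w₂, h1, h2⟩ := (hmem _ _).1 (hx (B + 1))
    have : K w₁ w₂ ≤ B := hB ⟨(w₁, w₂), rfl⟩
    exact hK w₁ w₂ h1 (h2 ⟨K w₁ w₂, by omega⟩)
  have hlim := tendsto_measure_iInter_atTop (μ := μ) (s := badSet a g)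
    (fun N => (hbad N).nullMeasurableSet) hanti ⟨0, measure_ne_top _ _⟩
  rw [hempty, measure_empty] at hlim
  obtain ⟨N, hN⟩ := (hlim.eventually (gt_mem_nhds (ENNReal.ofReal_pos.2 hδ))).exists
  have hcell : ∀ t, MeasurableSet (cellMap a g N ⁻¹' {t}) := by
    have : Measurable (cellMap a g N) := by
      refine Measurable.prodMk ?_ ?_
      · exact measurable_pi_iff.2 fun w₁ => measurable_pi_iff.2 fun w₂ =>
          measurableSet_setOfPred.1 (heq w₁ w₂)
      · exact measurable_pi_iff.2 fun w => measurable_pi_iff.2 fun k => hgk w k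
    exact fun t => this (measurableSet_singleton t)
  let e := Finite.equivFin ((Wball S r → Wball S r → Prop) × (Wball S r → Fin N → Bool))
  refine ⟨_, fun i => cellMap a g N ⁻¹' {e.symm i} \ badSet a g N, badSet a g N,
    fun i => (hcell _).diff (hbad N), hbad N, ?_, fun i => Set.disjoint_sdiff_left, ?_, ?_, ?_⟩
  · intro i j hij
    rw [Set.disjoint_left]
    rintro x ⟨h1, -⟩ ⟨h2, -⟩
    exact hij (e.symm.injective (h1.symm.trans h2))
  · rw [Set.eq_univ_iff_forall]
    intro x
    by_cases hx : x ∈ badSet a g N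
    · exact Or.inr hx
    · exact Or.inl (Set.mem_iUnion.2 ⟨e (cellMap a g N x), by simp, hx⟩)
  · exact (ENNReal.lt_ofReal_iff_toReal_lt (measure_ne_top _ _)).1 hN
  · intro i
    rcases (cellMap a g N ⁻¹' {e.symm i} \ badSet a g N).eq_empty_or_nonempty with h0 | ⟨x₀, hx₀, hb₀⟩
    · refine ⟨fun _ _ => True, ⟨fun _ => trivial, fun _ => trivial, fun _ _ => trivial⟩, ?_, ?_⟩
      · intro x hx
        simp only [h0] at hx
        exact hx.elim
      · intro _ _ h
        exact absurd trivial h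
    · have hsame : ∀ x ∈ cellMap a g N ⁻¹' {e.symm i} \ badSet a g N,
          cellMap a g N x = cellMap a g N x₀ := fun x hx => hx.1.trans hx₀.symm
      refine ⟨fun w₁ w₂ => a w₁ x₀ = a w₂ x₀,
        ⟨fun _ => rfl, fun h => h.symm, fun h h' => h.trans h'⟩, ?_, ?_⟩
      · intro x hx w₁ w₂
        exact iff_of_eq (congrFun (congrFun (congrArg Prod.fst (hsame x hx)) w₁) w₂)
      · intro w₁ w₂ hne
        have : f.act ↑w₁ '' (cellMap a g N ⁻¹' {e.symm i} \ badSet a g N) ∩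
            f.act ↑w₂ '' (cellMap a g N ⁻¹' {e.symm i} \ badSet a g N) = ∅ := by
          rw [Set.eq_empty_iff_forall_notMem]
          rintro z ⟨⟨x, hx, hxz⟩, ⟨y, hy, hyz⟩⟩
          refine hb₀ ((hmem _ _).2 ⟨w₁, w₂, hne, fun k => ?_⟩)
          have h1 : g (a w₁ x) k = g (a w₁ x₀) k :=
            congrFun (congrFun (congrArg Prod.snd (hsame x hx)) w₁) k
          have h2 : g (a w₂ y) k = g (a w₂ x₀) k :=
            congrFun (congrFun (congrArg Prod.snd (hsame y hy)) w₂) k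
          rw [← h1, ← h2]
          exact congrArg (fun z => g z k) (hxz.trans hyz.symm)
        rw [this, measure_empty]
end

section
/- If f ∈ A(S) weakly contains h ∈ A(S), then there exists g ∈ A(S) that is weakly equivalent to f and that contains h as a factor: there exists a Borel map π : X → X with π_*μ = μ such that for every γ ∈ F_S, π(g_γ(x)) = h_γ(π(x)) for μ-almost every x ∈ X. -/
open MeasureTheory

/-- Weak equivalence of p.m.p. actions. -/
def WeaklyEquivalent {G : Type*} [Group G] {X Y : Type*} [MeasurableSpace X] [MeasurableSpace Y]
    {μ : Measure X} {ν : Measure Y} (f : PMP G X μ) (g : PMP G Y ν) : Prop :=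
  WeaklyContains f g ∧ WeaklyContains g f

section Helpers
open Set Filter Topology

theorem cdf_continuous_of_null (ν : Measure ℝ) [IsProbabilityMeasure ν]
    (hν : ∀ y, ν {y} = 0) : Continuous (ProbabilityTheory.cdf ν) := by
  rw [continuous_iff_continuousAt]
  intro x
  set T := ProbabilityTheory.cdf ν
  rw [T.mono.continuousAt_iff_leftLim_eq_rightLim, T.rightLim_eq]
  have h := T.measure_singleton x
  rw [ProbabilityTheory.measure_cdf, hν x] at h
  have h1 := T.mono.leftLim_le (le_refl x)
  have h2 := ENNReal.ofReal_eq_zero.1 h.symm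
  linarith

theorem map_cdf_uniform (ν : Measure ℝ) [IsProbabilityMeasure ν]
    (hν : ∀ y, ν {y} = 0) :
    ν.map (ProbabilityTheory.cdf ν) = volume.restrict (Icc (0:ℝ) 1) := by
  have hc := cdf_continuous_of_null ν hν
  set T := ProbabilityTheory.cdf ν with hT
  have : IsProbabilityMeasure (ν.map T) :=
    Measure.isProbabilityMeasure_map hc.measurable.aemeasurable
  refine Measure.ext_of_Iic _ _ fun s => ?_
  rw [Measure.map_apply hc.measurable measurableSet_Iic,
    Measure.restrict_apply measurableSet_Iic]
  rcases lt_or_ge s 0 with hs | hs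
  · have h1 : T ⁻¹' Iic s = ∅ := by
      ext t
      have := ProbabilityTheory.cdf_nonneg ν t
      simp only [mem_preimage, mem_Iic, mem_empty_iff_false, iff_false]
      intro h; linarith
    have h2 : Iic s ∩ Icc (0:ℝ) 1 = ∅ := by
      ext t
      simp only [mem_inter_iff, mem_Iic, mem_Icc, mem_empty_iff_false, iff_false]
      rintro ⟨h, h', _⟩; linarith
    rw [h1, h2]; simp
  rcases le_or_gt 1 s with hs1 | hs1
  · have h1 : T ⁻¹' Iic s = univ := by
      ext t
      have := ProbabilityTheory.cdf_le_one ν t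
      simp only [mem_preimage, mem_Iic, mem_univ, iff_true]
      linarith
    have h2 : Iic s ∩ Icc (0:ℝ) 1 = Icc 0 1 := by
      ext t
      simp only [mem_inter_iff, mem_Iic, mem_Icc]
      constructor
      · exact fun h => h.2
      · exact fun h => ⟨by linarith [h.2], h⟩
    rw [h1, h2]; simp
  have h2 : Iic s ∩ Icc (0:ℝ) 1 = Icc 0 s := by
    ext t
    simp only [mem_inter_iff, mem_Iic, mem_Icc]
    constructor
    · exact fun h => ⟨h.2.1, h.1⟩
    · exact fun h => ⟨h.2, h.1, by linarith [h.2]⟩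
  rw [h2, Real.volume_Icc, sub_zero]
  set B := T ⁻¹' Iic s with hB
  by_cases hne : B.Nonempty
  · obtain ⟨b, hb⟩ := ((ProbabilityTheory.tendsto_cdf_atTop ν).eventually
      (lt_mem_nhds hs1)).exists
    have hbd : BddAbove B := by
      refine ⟨b, fun t ht => ?_⟩
      by_contra hlt
      have h3 : T b ≤ T t := T.mono (not_le.1 hlt).le
      have h4 : T t ≤ s := ht
      have h5 : s < T b := hb
      linarith
    have hcl : IsClosed B := isClosed_Iic.preimage hc
    set a := sSup B
    have ha : a ∈ B := hcl.csSup_mem hne hbd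
    have hBa : B = Iic a := by
      ext t
      constructor
      · exact fun ht => le_csSup hbd ht
      · intro ht
        exact le_trans (T.mono ht) ha
    have hTa : T a = s := by
      apply le_antisymm ha
      have h6 : Tendsto T (𝓝[>] a) (𝓝 (T a)) := hc.continuousAt.mono_left nhdsWithin_le_nhds
      refine ge_of_tendsto h6 ?_
      filter_upwards [self_mem_nhdsWithin] with t ht
      by_contra h7
      have : t ∈ B := (not_le.1 h7).le
      rw [hBa] at this
      exact absurd (mem_Iic.1 this) (not_le.2 ht)
    rw [hBa, ← ProbabilityTheory.ofReal_cdf, ← hT, hTa]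
  · have hs0 : s ≤ 0 := by
      refine ge_of_tendsto (ProbabilityTheory.tendsto_cdf_atBot ν) (Eventually.of_forall fun t => ?_)
      by_contra h7
      exact hne ⟨t, (not_le.1 h7).le⟩
    rw [not_nonempty_iff_eq_empty.1 hne, le_antisymm hs0 hs]
    simp

/-- a measurable map injective on a conull set has a measurable almost everywhere left inverse -/
theorem exists_ae_left_inverse {Y Z : Type*} [MeasurableSpace Y] [StandardBorelSpace Y]
    [MeasurableSpace Z] [MeasurableSpace.CountablySeparated Z]
    [Nonempty Y] (ν : Measure Y) (T : Y → Z) (hT : Measurable T) (N : Set Y)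
    (hN : MeasurableSet N) (hN0 : ν N = 0) (hinj : InjOn T Nᶜ) :
    ∃ T' : Z → Y, Measurable T' ∧ ∀ᵐ y ∂ν, T' (T y) = y := by
  have := hN.compl.standardBorel
  have hemb : MeasurableEmbedding (Nᶜ.domRestrict T) :=
    (hT.comp measurable_subtype_coe).measurableEmbedding (injOn_iff_injective.1 hinj)
  obtain ⟨T', hT', hcomp⟩ := hemb.exists_measurable_extend
    (g := fun y : (Nᶜ : Set Y) => (y : Y)) measurable_subtype_coe (fun _ => inferInstance)
  refine ⟨T', hT', ?_⟩
  have : ∀ᵐ y ∂ν, y ∈ Nᶜ := measure_eq_zero_iff_ae_notMem.1 hN0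
  filter_upwards [this] with y hy
  exact congrFun hcomp ⟨y, hy⟩

theorem exists_uniform {Y : Type*} [MeasurableSpace Y] [StandardBorelSpace Y]
    (ν : Measure Y) [IsProbabilityMeasure ν] (hν : ∀ y, ν {y} = 0) :
    ∃ (T : Y → ℝ) (T' : ℝ → Y), Measurable T ∧ Measurable T' ∧
      ν.map T = volume.restrict (Icc (0:ℝ) 1) ∧ ∀ᵐ y ∂ν, T' (T y) = y := by
  have hne : Nonempty Y := nonempty_of_isProbabilityMeasure ν
  have hr := measurableEmbedding_embeddingReal Y
  set r := embeddingReal Y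
  set ρ := ν.map r with hρ
  have hρp : IsProbabilityMeasure ρ := Measure.isProbabilityMeasure_map hr.measurable.aemeasurable
  have hρ0 : ∀ t, ρ {t} = 0 := by
    intro t
    rw [hρ, Measure.map_apply hr.measurable (measurableSet_singleton t)]
    have hs : (r ⁻¹' {t}).Subsingleton := by
      intro a ha b hb
      exact hr.injective (by rw [mem_preimage, mem_singleton_iff] at ha hb; rw [ha, hb])
    rcases hs.eq_empty_or_singleton with h | ⟨y, h⟩
    · rw [h]; simp
    · rw [h]; exact hν y
  have hc := cdf_continuous_of_null ρ hρ0
  have hmap := map_cdf_uniform ρ hρ0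
  set T := ProbabilityTheory.cdf ρ with hT
  have hTm : Measurable fun y => T (r y) := hc.measurable.comp hr.measurable
  have hmap' : ν.map (fun y => T (r y)) = volume.restrict (Icc (0:ℝ) 1) := by
    rw [← hmap, hρ, Measure.map_map hc.measurable hr.measurable]; rfl
  set N : Set Y := ⋃ q : ℚ, (fun y => T (r y)) ⁻¹' {T (q : ℝ)} with hN
  have hNm : MeasurableSet N :=
    MeasurableSet.iUnion fun q => hTm (measurableSet_singleton _)
  have hN0 : ν N = 0 := by
    rw [hN, measure_iUnion_null_iff]
    intro q
    rw [← Measure.map_apply hTm (measurableSet_singleton _), hmap']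
    simp
  have hinj : InjOn (fun y => T (r y)) Nᶜ := by
    have key : ∀ a ∈ Nᶜ, ∀ b, T (r a) = T (r b) → r a < r b → False := by
      intro a ha b hab hlt
      obtain ⟨q, hq1, hq2⟩ := exists_rat_btwn hlt
      apply ha
      refine mem_iUnion.2 ⟨q, ?_⟩
      have h1 := T.mono hq1.le
      have h2 := T.mono hq2.le
      change T (r a) = T q
      linarith
    intro a ha b hb hab
    apply hr.injective
    rcases lt_trichotomy (r a) (r b) with h | h | h
    · exact (key a ha b hab h).elim
    · exact h
    · exact (key b hb a hab.symm h).elim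
  obtain ⟨T', hT', hae⟩ := exists_ae_left_inverse ν _ hTm N hNm hN0 hinj
  exact ⟨_, T', hTm, hT', hmap', hae⟩

theorem exists_iso_atomless {Y Z : Type*} [MeasurableSpace Y] [StandardBorelSpace Y]
    [MeasurableSpace Z] [StandardBorelSpace Z] [Nonempty Y] [Nonempty Z]
    (ν : Measure Y) (ρ : Measure Z) [IsFiniteMeasure ν] [IsFiniteMeasure ρ]
    (hν : ∀ y, ν {y} = 0) (hρ : ∀ y, ρ {y} = 0) (hm : ν univ = ρ univ) :
    ∃ (Θ : Y → Z) (Θ' : Z → Y), Measurable Θ ∧ Measurable Θ' ∧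
      ν.map Θ = ρ ∧ ρ.map Θ' = ν ∧ (∀ᵐ y ∂ν, Θ' (Θ y) = y) ∧ ∀ᵐ z ∂ρ, Θ (Θ' z) = z := by
  by_cases h0 : ν univ = 0
  · have h1 : ρ univ = 0 := by rw [← hm, h0]
    rw [Measure.measure_univ_eq_zero] at h0 h1
    subst h0 h1
    refine ⟨fun _ => Classical.arbitrary Z, fun _ => Classical.arbitrary Y, measurable_const,
      measurable_const, by simp, by simp, by simp, by simp⟩
  set c := ν univ with hc
  have hct : c ≠ ⊤ := measure_ne_top _ _
  have hν' : IsProbabilityMeasure (c⁻¹ • ν) := ⟨by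
    rw [Measure.smul_apply, ← hc, smul_eq_mul, ENNReal.inv_mul_cancel h0 hct]⟩
  have hρ' : IsProbabilityMeasure (c⁻¹ • ρ) := ⟨by
    rw [Measure.smul_apply, ← hm, smul_eq_mul, ENNReal.inv_mul_cancel h0 hct]⟩
  have hνc : ν = c • (c⁻¹ • ν) := by
    rw [smul_smul, ENNReal.mul_inv_cancel h0 hct, one_smul]
  have hρc : ρ = c • (c⁻¹ • ρ) := by
    rw [smul_smul, ENNReal.mul_inv_cancel h0 hct, one_smul]
  set ν' := c⁻¹ • ν with hν'd
  set ρ' := c⁻¹ • ρ with hρ'd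
  have aeν : ∀ P : Y → Prop, (∀ᵐ y ∂ν', P y) → ∀ᵐ y ∂ν, P y := by
    intro P hP; rw [hνc]; exact Measure.ae_smul_measure hP c
  have aeρ : ∀ P : Z → Prop, (∀ᵐ y ∂ρ', P y) → ∀ᵐ y ∂ρ, P y := by
    intro P hP; rw [hρc]; exact Measure.ae_smul_measure hP c
  obtain ⟨T, T', hT, hT', hTmap, hTi⟩ := exists_uniform ν' (by simp [hν'd, hν])
  obtain ⟨R, R', hR, hR', hRmap, hRi⟩ := exists_uniform ρ' (by simp [hρ'd, hρ])
  have hT2 : ∀ᵐ z ∂ρ', T (T' (R z)) = R z := by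
    have h1 : ∀ᵐ t ∂(ν'.map T), T (T' t) = t := by
      refine (ae_map_iff (p := fun t => T (T' t) = t) hT.aemeasurable
        (measurableSet_eq_fun (hT.comp hT') measurable_id)).2 ?_
      filter_upwards [hTi] with y hy
      rw [hy]
    rw [hTmap, ← hRmap] at h1
    exact ae_of_ae_map hR.aemeasurable h1
  have hR2 : ∀ᵐ y ∂ν', R (R' (T y)) = T y := by
    have h1 : ∀ᵐ t ∂(ρ'.map R), R (R' t) = t := by
      refine (ae_map_iff (p := fun t => R (R' t) = t) hR.aemeasurable
        (measurableSet_eq_fun (hR.comp hR') measurable_id)).2 ?_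
      filter_upwards [hRi] with y hy
      rw [hy]
    rw [hRmap, ← hTmap] at h1
    exact ae_of_ae_map hT.aemeasurable h1
  refine ⟨fun y => R' (T y), fun z => T' (R z), hR'.comp hT, hT'.comp hR, ?_, ?_, ?_, ?_⟩
  · rw [hνc, hρc, Measure.map_smul]
    congr 1
    have : ν'.map (fun y => R' (T y)) = (ν'.map T).map R' := by
      rw [Measure.map_map hR' hT]; rfl
    rw [this, hTmap, ← hRmap, Measure.map_map hR' hR]
    have : (R' ∘ R) =ᵐ[ρ'] id := hRi
    rw [Measure.map_congr this, Measure.map_id]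
  · rw [hνc, hρc, Measure.map_smul]
    congr 1
    have : ρ'.map (fun y => T' (R y)) = (ρ'.map R).map T' := by
      rw [Measure.map_map hT' hR]; rfl
    rw [this, hRmap, ← hTmap, Measure.map_map hT' hT]
    have : (T' ∘ T) =ᵐ[ν'] id := hTi
    rw [Measure.map_congr this, Measure.map_id]
  · apply aeν
    filter_upwards [hR2, hTi] with y h1 h2
    rw [h1, h2]
  · apply aeρ
    filter_upwards [hT2, hRi] with y h1 h2
    rw [h1, h2]

theorem countable_atoms {X : Type*} [MeasurableSpace X] [MeasurableSingletonClass X]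
    (μ : Measure X) [IsFiniteMeasure μ] : {x | μ {x} ≠ 0}.Countable := by
  have h := Measure.countable_meas_pos_of_disjoint_iUnion (μ := μ) (As := fun x : X => ({x} : Set X))
    (fun x => measurableSet_singleton x) (fun a b hab => by simpa using hab)
  simpa [pos_iff_ne_zero] using h

theorem exists_iso_extension {X K : Type*} [MeasurableSpace X] [StandardBorelSpace X]
    [MeasurableSpace K] [StandardBorelSpace K] (μ : Measure X) (ν : Measure K)
    [IsProbabilityMeasure μ] [IsProbabilityMeasure ν]
    (p : K → X) (hp : Measurable p) (hmap : ν.map p = μ) (κ : X → K)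
    (hκ : ∀ x, μ {x} ≠ 0 → p (κ x) = x ∧ μ {x} ≤ ν {κ x}) :
    ∃ (Θ : X → K) (Θ' : K → X), Measurable Θ ∧ Measurable Θ' ∧
      μ.map Θ = ν ∧ ν.map Θ' = μ ∧ (∀ᵐ y ∂μ, Θ' (Θ y) = y) ∧ ∀ᵐ z ∂ν, Θ (Θ' z) = z := by
  classical
  have hX : Nonempty X := nonempty_of_isProbabilityMeasure μ
  have hK : Nonempty K := nonempty_of_isProbabilityMeasure ν
  set A := {x | μ {x} ≠ 0} with hA
  have hAc : A.Countable := countable_atoms μ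
  have hAm : MeasurableSet A := hAc.measurableSet
  set B := p ⁻¹' A with hB
  have hBm : MeasurableSet B := hp hAm
  -- almost every point of `B` is in the range of `κ`
  have hfib : ∀ x ∈ A, ν (p ⁻¹' {x} \ {κ x}) = 0 := by
    intro x hx
    obtain ⟨h1, h2⟩ := hκ x hx
    rw [measure_sdiff (by simpa using h1) (measurableSet_singleton _).nullMeasurableSet
      (measure_ne_top _ _), ← Measure.map_apply hp (measurableSet_singleton _), hmap]
    exact tsub_eq_zero_of_le h2
  have hBκ : ∀ᵐ k ∂ν, k ∈ B → κ (p k) = k := by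
    have h1 : ν (⋃ x ∈ A, p ⁻¹' {x} \ {κ x}) = 0 :=
      (measure_biUnion_null_iff hAc).2 hfib
    filter_upwards [measure_eq_zero_iff_ae_notMem.1 h1] with k hk hkB
    by_contra hne
    exact hk (mem_biUnion (x := p k) hkB ⟨rfl, fun h => hne (mem_singleton_iff.1 h).symm⟩)
  have hna : ∀ x, (μ.restrict Aᶜ) {x} = 0 := by
    intro x
    rw [Measure.restrict_apply (measurableSet_singleton _)]
    by_cases hx : x ∈ A
    · have : {x} ∩ Aᶜ = (∅ : Set X) := by ext y; simp; rintro rfl; exact hx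
      rw [this]; simp
    · exact measure_mono_null inter_subset_left (not_not.1 hx)
  have hnb : ∀ k, (ν.restrict Bᶜ) {k} = 0 := by
    intro k
    rw [Measure.restrict_apply (measurableSet_singleton _)]
    by_cases hx : p k ∈ A
    · have : {k} ∩ Bᶜ = (∅ : Set K) := by ext y; simp; rintro rfl; exact hx
      rw [this]; simp
    · have h1 : μ {p k} = 0 := not_not.1 hx
      rw [← hmap, Measure.map_apply hp (measurableSet_singleton _)] at h1
      refine measure_mono_null (inter_subset_left.trans ?_) h1
      simp
  have hmass : (μ.restrict Aᶜ) univ = (ν.restrict Bᶜ) univ := by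
    rw [Measure.restrict_apply_univ, Measure.restrict_apply_univ, ← hmap,
      Measure.map_apply hp hAm.compl]
    rfl
  obtain ⟨Ψ, Ψ', hΨ, hΨ', hΨm, hΨm', hi1, hi2⟩ :=
    exists_iso_atomless (μ.restrict Aᶜ) (ν.restrict Bᶜ) hna hnb hmass
  set Θ : X → K := fun x => if x ∈ A then κ x else Ψ x with hΘ
  set Θ' : K → X := fun k => if k ∈ B then p k else Ψ' k with hΘ'
  have hΘm : Measurable Θ := by
    refine hΨ.measurable_of_countable_ne (hAc.mono fun x hx => ?_)
    by_contra h
    exact hx (by simp only [hΘ]; rw [if_neg h])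
  have hΘ'm : Measurable Θ' := Measurable.ite hBm hp hΨ'
  have hinA : ∀ᵐ k ∂(ν.restrict Bᶜ), Ψ' k ∉ A := by
    have h1 : ∀ᵐ x ∂((ν.restrict Bᶜ).map Ψ'), x ∈ Aᶜ := by
      rw [hΨm']; exact ae_restrict_mem hAm.compl
    exact ae_of_ae_map hΨ'.aemeasurable h1
  have hΘΘ' : ∀ᵐ k ∂ν, Θ (Θ' k) = k := by
    rw [ae_restrict_iff' hBm.compl] at hi2 hinA
    filter_upwards [hi2, hinA, hBκ] with k h1 h2 h3
    by_cases hk : k ∈ B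
    · simp only [hΘ', if_pos hk, hΘ]
      rw [if_pos (show p k ∈ A from hk)]
      exact h3 hk
    · simp only [hΘ', if_neg hk, hΘ]
      rw [if_neg (h2 hk)]
      exact h1 hk
  have hmap' : ν.map Θ' = μ := by
    rw [← Measure.restrict_add_restrict_compl (μ := ν) hBm, Measure.map_add _ _ hΘ'm]
    have h1 : (ν.restrict B).map Θ' = μ.restrict A := by
      rw [← hmap, Measure.restrict_map hp hAm]
      apply Measure.map_congr
      filter_upwards [ae_restrict_mem hBm] with k hk
      simp only [hΘ', if_pos hk]
    have h2 : (ν.restrict Bᶜ).map Θ' = μ.restrict Aᶜ := by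
      rw [← hΨm']
      apply Measure.map_congr
      filter_upwards [ae_restrict_mem hBm.compl] with k hk
      simp only [hΘ']
      rw [if_neg hk]
    rw [h1, h2, Measure.restrict_add_restrict_compl hAm]
  have hmapΘ : μ.map Θ = ν := by
    rw [← hmap', Measure.map_map hΘm hΘ'm]
    have : Θ ∘ Θ' =ᵐ[ν] id := hΘΘ'
    rw [Measure.map_congr this, Measure.map_id]
  refine ⟨Θ, Θ', hΘm, hΘ'm, hmapΘ, hmap', ?_, hΘΘ'⟩
  have h1 : ∀ᵐ x ∂(ν.map Θ'), Θ' (Θ x) = x := by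
    refine (ae_map_iff (p := fun x => Θ' (Θ x) = x) hΘ'm.aemeasurable
      (measurableSet_eq_fun (hΘ'm.comp hΘm) measurable_id)).2 ?_
    filter_upwards [hΘΘ'] with k hk
    rw [hk]
  rwa [hmap'] at h1

theorem PMP.act_inv_act {G X : Type*} [Group G] [MeasurableSpace X] {μ : Measure X}
    (f : PMP G X μ) (γ : G) (x : X) : f.act γ⁻¹ (f.act γ x) = x := by
  rw [← f.act_mul, inv_mul_cancel, f.act_one]

theorem PMP.act_act_inv {G X : Type*} [Group G] [MeasurableSpace X] {μ : Measure X}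
    (f : PMP G X μ) (γ : G) (x : X) : f.act γ (f.act γ⁻¹ x) = x := by
  rw [← f.act_mul, mul_inv_cancel, f.act_one]

theorem exists_transport {G X K : Type*} [Group G] [Countable G]
    [MeasurableSpace X] [StandardBorelSpace X]
    [MeasurableSpace K] [StandardBorelSpace K] {μ : Measure X} {ν : Measure K}
    (a : PMP G K ν) (Θ : X → K) (Θ' : K → X) (hΘ : Measurable Θ) (hΘ' : Measurable Θ')
    (hm : μ.map Θ = ν) (hm' : ν.map Θ' = μ) (hi : ∀ᵐ y ∂μ, Θ' (Θ y) = y)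
    (hi' : ∀ᵐ z ∂ν, Θ (Θ' z) = z) :
    ∃ g : PMP G X μ, (∀ γ, ∀ᵐ x ∂μ, Θ (g.act γ x) = a.act γ (Θ x)) ∧
      ∀ γ, ∀ᵐ k ∂ν, Θ' (a.act γ k) = g.act γ (Θ' k) := by
  classical
  set X1 : Set X := {x | Θ' (Θ x) = x} ∩ ⋂ γ, {x | Θ (Θ' (a.act γ (Θ x))) = a.act γ (Θ x)} with hX1
  have hX1m : MeasurableSet X1 := by
    refine (measurableSet_eq_fun (hΘ'.comp hΘ) measurable_id).inter
      (MeasurableSet.iInter fun γ => ?_)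
    exact measurableSet_eq_fun (hΘ.comp (hΘ'.comp ((a.measurable γ).comp hΘ)))
      ((a.measurable γ).comp hΘ)
  have hX1ae : ∀ᵐ x ∂μ, x ∈ X1 := by
    have h1 : ∀ γ, ∀ᵐ x ∂μ, Θ (Θ' (a.act γ (Θ x))) = a.act γ (Θ x) := by
      intro γ
      have h2 : ∀ᵐ k ∂ν, Θ (Θ' (a.act γ k)) = a.act γ k :=
        (a.preserves γ).quasiMeasurePreserving.ae hi'
      exact (⟨hΘ, hm⟩ : MeasurePreserving Θ μ ν).quasiMeasurePreserving.ae h2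
    filter_upwards [hi, ae_all_iff.2 h1] with x hx1 hx2
    exact ⟨hx1, mem_iInter.2 hx2⟩
  have hX1b : ∀ x ∈ X1, ∀ γ, Θ (Θ' (a.act γ (Θ x))) = a.act γ (Θ x) :=
    fun x hx γ => mem_iInter.1 hx.2 γ
  have hinv : ∀ x ∈ X1, ∀ γ, Θ' (a.act γ (Θ x)) ∈ X1 := by
    intro x hx γ
    refine ⟨?_, mem_iInter.2 fun δ => ?_⟩
    · change Θ' (Θ (Θ' (a.act γ (Θ x)))) = _
      rw [hX1b x hx γ]
    · change Θ (Θ' (a.act δ (Θ (Θ' (a.act γ (Θ x)))))) = a.act δ (Θ (Θ' (a.act γ (Θ x))))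
      rw [hX1b x hx γ, ← a.act_mul, hX1b x hx]
  set g : G → X → X := fun γ x => if x ∈ X1 then Θ' (a.act γ (Θ x)) else x with hg
  have hgp : ∀ γ, ∀ x ∈ X1, g γ x = Θ' (a.act γ (Θ x)) := fun γ x hx => if_pos hx
  have hgn : ∀ γ, ∀ x ∉ X1, g γ x = x := fun γ x hx => if_neg hx
  have hgm : ∀ γ, Measurable (g γ) := fun γ =>
    Measurable.ite hX1m (hΘ'.comp ((a.measurable γ).comp hΘ)) measurable_id
  refine ⟨⟨g, hgm, fun γ => ⟨hgm γ, ?_⟩, ?_, ?_⟩, ?_, ?_⟩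
  · have h1 : g γ =ᵐ[μ] Θ' ∘ (a.act γ ∘ Θ) := by
      filter_upwards [hX1ae] with x hx using hgp γ x hx
    rw [Measure.map_congr h1, ← Measure.map_map hΘ' ((a.measurable γ).comp hΘ),
      ← Measure.map_map (a.measurable γ) hΘ, hm, (a.preserves γ).map_eq, hm']
  · intro x
    by_cases hx : x ∈ X1
    · rw [hgp _ x hx, a.act_one]; exact hx.1
    · exact hgn _ x hx
  · intro γ₁ γ₂ x
    by_cases hx : x ∈ X1
    · rw [hgp _ x hx, hgp γ₂ x hx, hgp _ _ (hinv x hx γ₂), hX1b x hx, a.act_mul]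
    · rw [hgn _ x hx, hgn γ₂ x hx, hgn γ₁ x hx]
  · intro γ
    filter_upwards [hX1ae] with x hx
    change Θ (g γ x) = _
    rw [hgp _ x hx, hX1b x hx]
  · intro γ
    have h1 : ∀ᵐ k ∂ν, Θ' k ∈ X1 := by
      rw [← hm'] at hX1ae
      exact ae_of_ae_map hΘ'.aemeasurable hX1ae
    filter_upwards [h1, hi'] with k hk hk'
    change _ = g γ (Θ' k)
    rw [hgp _ _ hk, hk']

theorem stat_eq {G X α : Type*} [Group G] [MeasurableSpace X] {μ : Measure X}
    [MeasurableSpace α] [MeasurableSingletonClass α]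
    (f : PMP G X μ) (γ : G) (D : X → α) (hD : Measurable D) (i j : α) :
    (μ (f.act γ '' (D ⁻¹' {i}) ∩ D ⁻¹' {j})).toReal =
      μ.real {x | D x = i ∧ D (f.act γ x) = j} := by
  have h1 : f.act γ '' (D ⁻¹' {i}) = f.act γ⁻¹ ⁻¹' (D ⁻¹' {i}) := by
    ext y
    constructor
    · rintro ⟨x, hx, rfl⟩
      simpa [f.act_inv_act] using hx
    · intro hy
      exact ⟨f.act γ⁻¹ y, hy, f.act_act_inv γ y⟩
  rw [h1, Measure.real]
  congr 1
  rw [← (f.preserves γ).measure_preimage]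
  · congr 1
    ext x
    simp [f.act_inv_act]
  · exact ((((f.measurable _) (hD (measurableSet_singleton i)))).inter
      (hD (measurableSet_singleton j))).nullMeasurableSet

theorem weaklyContains_iff {G X Y : Type*} [Group G] [MeasurableSpace X] [MeasurableSpace Y]
    {μ : Measure X} {ν : Measure Y} (f : PMP G X μ) (g : PMP G Y ν) :
    WeaklyContains f g ↔ ∀ n : ℕ, 1 ≤ n → ∀ C : Y → Fin n, Measurable C →
    ∀ F : Finset G, ∀ ε : ℝ, 0 < ε →
      ∃ D : X → Fin n, Measurable D ∧
        ∀ i j : Fin n, ∀ γ ∈ F,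
          |μ.real {x | D x = i ∧ D (f.act γ x) = j} -
            ν.real {x | C x = i ∧ C (g.act γ x) = j}| ≤ ε := by
  unfold WeaklyContains
  constructor
  · intro h n hn C hC F ε hε
    obtain ⟨D, hD, H⟩ := h n hn C hC F ε hε
    refine ⟨D, hD, fun i j γ hγ => ?_⟩
    rw [← stat_eq f γ D hD, ← stat_eq g γ C hC]
    exact H i j γ hγ
  · intro h n hn C hC F ε hε
    obtain ⟨D, hD, H⟩ := h n hn C hC F ε hε
    refine ⟨D, hD, fun i j γ hγ => ?_⟩
    rw [stat_eq f γ D hD, stat_eq g γ C hC]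
    exact H i j γ hγ

theorem WeaklyContains.finite {G X Y α : Type*} [Group G] [MeasurableSpace X] [MeasurableSpace Y]
    {μ : Measure X} {ν : Measure Y} {f : PMP G X μ} {g : PMP G Y ν} (h : WeaklyContains f g)
    [Fintype α] [Nonempty α] [MeasurableSpace α] [MeasurableSingletonClass α]
    (C : Y → α) (hC : Measurable C) (F : Finset G) (ε : ℝ) (hε : 0 < ε) :
    ∃ D : X → α, Measurable D ∧ ∀ i j : α, ∀ γ ∈ F,
      |μ.real {x | D x = i ∧ D (f.act γ x) = j} -
            ν.real {x | C x = i ∧ C (g.act γ x) = j}| ≤ ε := by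
  let e := Fintype.equivFin α
  obtain ⟨D, hD, H⟩ := (weaklyContains_iff f g).1 h (Fintype.card α) Fintype.card_pos
    (fun y => e (C y)) ((measurable_of_countable e).comp hC) F ε hε
  refine ⟨fun x => e.symm (D x), (measurable_of_countable e.symm).comp hD, fun i j γ hγ => ?_⟩
  have := H (e i) (e j) γ hγ
  simp only [EmbeddingLike.apply_eq_iff_eq] at this
  simpa only [Equiv.symm_apply_eq] using this

theorem WeaklyContains.trans {G X Y Z : Type*} [Group G] [MeasurableSpace X] [MeasurableSpace Y]
    [MeasurableSpace Z] {μ : Measure X} {ν : Measure Y} {ρ : Measure Z}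
    {f : PMP G X μ} {g : PMP G Y ν} {k : PMP G Z ρ}
    (h1 : WeaklyContains f g) (h2 : WeaklyContains g k) : WeaklyContains f k := by
  rw [weaklyContains_iff] at *
  intro n hn C hC F ε hε
  obtain ⟨D, hD, H⟩ := h2 n hn C hC F (ε / 2) (half_pos hε)
  obtain ⟨E, hE, H'⟩ := h1 n hn D hD F (ε / 2) (half_pos hε)
  refine ⟨E, hE, fun i j γ hγ => ?_⟩
  have a1 := abs_le.1 (H i j γ hγ)
  have a2 := abs_le.1 (H' i j γ hγ)
  exact abs_le.2 ⟨by linarith [a1.1, a2.1], by linarith [a1.2, a2.2]⟩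

theorem weaklyContains_of_factor {G X Y : Type*} [Group G] [MeasurableSpace X] [MeasurableSpace Y]
    {μ : Measure X} {ν : Measure Y} (f : PMP G X μ) (g : PMP G Y ν) (q : X → Y)
    (hq : Measurable q) (hm : μ.map q = ν)
    (he : ∀ γ, ∀ᵐ x ∂μ, q (f.act γ x) = g.act γ (q x)) : WeaklyContains f g := by
  rw [weaklyContains_iff]
  intro n hn C hC F ε hε
  refine ⟨fun x => C (q x), hC.comp hq, fun i j γ _ => ?_⟩
  have h1 : ν.real {x | C x = i ∧ C (g.act γ x) = j} =
      μ.real {x | C (q x) = i ∧ C (q (f.act γ x)) = j} := by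
    have hms : MeasurableSet {x | C x = i ∧ C (g.act γ x) = j} :=
      (hC (measurableSet_singleton i)).inter ((hC.comp (g.measurable γ)) (measurableSet_singleton j))
    have h2 : MeasurePreserving q μ ν := ⟨hq, hm⟩
    rw [← h2.measureReal_preimage hms.nullMeasurableSet]
    apply measureReal_congr
    filter_upwards [he γ] with x hx
    apply propext
    change (C (q x) = i ∧ C (g.act γ (q x)) = j) ↔ (C (q x) = i ∧ C (q (f.act γ x)) = j)
    rw [hx]
  rw [h1]
  simpa using hε.le

theorem abs_real_sub_le_of_subset {X : Type*} [MeasurableSpace X] (μ : Measure X)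
    [IsFiniteMeasure μ] (A B N : Set X) (h1 : A ⊆ B ∪ N) (h2 : B ⊆ A ∪ N) :
    |μ.real A - μ.real B| ≤ μ.real N := by
  have a1 := (measureReal_mono (μ := μ) h1).trans (measureReal_union_le B N)
  have a2 := (measureReal_mono (μ := μ) h2).trans (measureReal_union_le A N)
  exact abs_le.2 ⟨by linarith, by linarith⟩

theorem exists_clopen_approx {K : Type*} [TopologicalSpace K] [CompactSpace K] [T2Space K]
    [TotallyDisconnectedSpace K] [SecondCountableTopology K] [MeasurableSpace K] [BorelSpace K]
    (ν : Measure K) [IsFiniteMeasure ν] (s : Set K) (hs : MeasurableSet s) (ε : ℝ) (hε : 0 < ε) :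
    ∃ t, IsClopen t ∧ ν.real (symmDiff s t) < ε := by
  have hb : TopologicalSpace.IsTopologicalBasis {s : Set K | IsClopen s} :=
    isTopologicalBasis_isClopen
  have hgen : (‹MeasurableSpace K›) = MeasurableSpace.generateFrom {s : Set K | IsClopen s} := by
    rw [BorelSpace.measurable_eq (α := K)]
    exact hb.borel_eq_generateFrom
  have halg : IsSetAlgebra {s : Set K | IsClopen s} :=
    ⟨isClopen_empty, fun s hs => hs.compl, fun s t hs ht => hs.union ht⟩
  obtain ⟨t, ht, h⟩ := (Measure.MeasureDense.of_generateFrom_isSetAlgebra_finite ν halg hgen).approx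
    s hs (measure_ne_top _ _) ε hε
  refine ⟨t, ht, ?_⟩
  rw [Measure.real]
  exact (ENNReal.lt_ofReal_iff_toReal_lt (measure_ne_top _ _)).1 h

theorem exists_clopen_partition {K : Type*} [TopologicalSpace K] [CompactSpace K] [T2Space K]
    [TotallyDisconnectedSpace K] [SecondCountableTopology K] [MeasurableSpace K] [BorelSpace K]
    (ν : Measure K) [IsFiniteMeasure ν] (n : ℕ) (hn : 1 ≤ n) (C : K → Fin n) (hC : Measurable C)
    (ε : ℝ) (hε : 0 < ε) :
    ∃ C' : K → Fin n, (∀ i, IsClopen (C' ⁻¹' {i})) ∧ ν.real {k | C k ≠ C' k} ≤ ε := by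
  classical
  have hn' : (0 : ℝ) < n := by exact_mod_cast hn
  choose t ht hts using fun i : Fin n => exists_clopen_approx ν (C ⁻¹' {i})
    (hC (measurableSet_singleton i)) (ε / n) (div_pos hε hn')
  have : NeZero n := ⟨by omega⟩
  -- `C' k` is some index determined by membership in the clopen sets `t i`
  let Φ : (Fin n → Prop) → Fin n := fun P => if h : ∃ i, P i then h.choose else 0
  let m : K → (Fin n → Prop) := fun k i => k ∈ t i
  refine ⟨fun k => Φ (m k), fun i => ?_, ?_⟩
  · have h1 : ∀ P : Fin n → Prop, IsClopen (m ⁻¹' {P}) := by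
      intro P
      have : m ⁻¹' {P} = ⋂ i, (if P i then t i else (t i)ᶜ) := by
        ext k
        simp only [mem_preimage, mem_singleton_iff, mem_iInter, funext_iff, m]
        refine forall_congr' fun i => ?_
        by_cases h : P i <;> simp [h]
      rw [this]
      refine isClopen_iInter_of_finite fun i => ?_
      split_ifs
      · exact ht i
      · exact (ht i).compl
    have h2 : (fun k => Φ (m k)) ⁻¹' {i} = ⋃ P ∈ {P | Φ P = i}, m ⁻¹' {P} := by
      ext k; simp
    rw [h2]
    exact (Set.toFinite _).isClopen_biUnion fun P _ => h1 P
  · have hsub : {k | C k ≠ Φ (m k)} ⊆ ⋃ i, symmDiff (C ⁻¹' {i}) (t i) := by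
      intro k hk
      by_contra hcon
      simp only [mem_iUnion, not_exists, mem_symmDiff, mem_preimage, mem_singleton_iff, not_or,
        not_and, not_not] at hcon
      have hm : ∀ i, m k i ↔ C k = i := fun i => ⟨fun h => by
        by_contra h'; exact h' ((hcon i).2 h), fun h => (hcon i).1 h⟩
      have hex : ∃ i, m k i := ⟨C k, (hm _).2 rfl⟩
      apply hk
      have : Φ (m k) = hex.choose := dif_pos hex
      rw [this]
      exact (hm _).1 hex.choose_spec
    calc ν.real {k | C k ≠ Φ (m k)} ≤ ν.real (⋃ i, symmDiff (C ⁻¹' {i}) (t i)) :=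
          measureReal_mono hsub
      _ ≤ ∑ i, ν.real (symmDiff (C ⁻¹' {i}) (t i)) := measureReal_iUnion_fintype_le _
      _ ≤ ∑ _i : Fin n, ε / n := Finset.sum_le_sum fun i _ => (hts i).le
      _ = ε := by simp; field_simp

theorem weaklyContains_of_limit {G X K ι : Type*} [Group G] [MeasurableSpace X]
    [TopologicalSpace K] [CompactSpace K] [T2Space K]
    [TotallyDisconnectedSpace K] [SecondCountableTopology K] [MeasurableSpace K] [BorelSpace K]
    {μ : Measure X} {ν : Measure K} [IsProbabilityMeasure ν]
    (f : PMP G X μ) (a : PMP G K ν) (ha : ∀ γ, Continuous (a.act γ))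
    (ℓ : Filter ι) [ℓ.NeBot] (Ψ : ι → X → K) (hΨ : ∀ i, Measurable (Ψ i))
    (he : ∀ i γ x, Ψ i (f.act γ x) = a.act γ (Ψ i x))
    (hlim : ∀ E : Set K, IsClopen E → Tendsto (fun i => μ.real (Ψ i ⁻¹' E)) ℓ (𝓝 (ν.real E))) :
    WeaklyContains f a := by
  rw [weaklyContains_iff]
  intro n hn C hC F ε hε
  obtain ⟨C', hC', hCC'⟩ := exists_clopen_partition ν n hn C hC (ε / 4) (by positivity)
  have hC'm : Measurable C' := measurable_to_countable' fun i => (hC' i).1.measurableSet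
  have hcl : ∀ i j γ, IsClopen {k | C' k = i ∧ C' (a.act γ k) = j} := fun i j γ =>
    (hC' i).inter ((hC' j).preimage (ha γ))
  have hev : ∀ᶠ l in ℓ, ∀ i : Fin n, ∀ j : Fin n, ∀ γ ∈ F,
      |μ.real (Ψ l ⁻¹' {k | C' k = i ∧ C' (a.act γ k) = j}) -
        ν.real {k | C' k = i ∧ C' (a.act γ k) = j}| < ε / 2 := by
    rw [eventually_all]; intro i
    rw [eventually_all]; intro j
    rw [eventually_all_finset]; intro γ _
    have := (Metric.tendsto_nhds.1 (hlim _ (hcl i j γ))) (ε / 2) (half_pos hε)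
    simpa only [Real.dist_eq] using this
  obtain ⟨l, hl⟩ := hev.exists
  refine ⟨fun x => C' (Ψ l x), hC'm.comp (hΨ l), fun i j γ hγ => ?_⟩
  have h1 := hl i j γ hγ
  have h2 : Ψ l ⁻¹' {k | C' k = i ∧ C' (a.act γ k) = j} =
      {x | C' (Ψ l x) = i ∧ C' (Ψ l (f.act γ x)) = j} := by
    ext x
    simp only [mem_preimage, he]
    rfl
  rw [h2] at h1
  have h3 : |ν.real {k | C' k = i ∧ C' (a.act γ k) = j} -
      ν.real {k | C k = i ∧ C (a.act γ k) = j}| ≤ ε / 2 := by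
    set N := {k | C k ≠ C' k} with hN
    have hNm : MeasurableSet N := (measurableSet_eq_fun hC hC'm).compl
    have h4 : ν.real (a.act γ ⁻¹' N) = ν.real N :=
      (a.preserves γ).measureReal_preimage hNm.nullMeasurableSet
    refine (abs_real_sub_le_of_subset ν _ _ (N ∪ a.act γ ⁻¹' N) ?_ ?_).trans ?_
    · rintro k ⟨k1, k2⟩
      by_cases g1 : C k = C' k
      · by_cases g2 : C (a.act γ k) = C' (a.act γ k)
        · exact Or.inl ⟨g1.trans k1, g2.trans k2⟩
        · exact Or.inr (Or.inr g2)
      · exact Or.inr (Or.inl g1)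
    · rintro k ⟨k1, k2⟩
      by_cases g1 : C k = C' k
      · by_cases g2 : C (a.act γ k) = C' (a.act γ k)
        · exact Or.inl ⟨g1.symm.trans k1, g2.symm.trans k2⟩
        · exact Or.inr (Or.inr g2)
      · exact Or.inr (Or.inl g1)
    · refine (measureReal_union_le _ _).trans ?_
      rw [h4]; linarith
  have b1 := abs_lt.1 h1
  have b2 := abs_le.1 h3
  exact abs_le.2 ⟨by linarith [b1.1, b2.1], by linarith [b1.2, b2.2]⟩

/-- The symbolic coding of an action by a labelling `D`. -/
def codeMap {G X : Type*} [Group G] [MeasurableSpace X] {μ : Measure X} (f : PMP G X μ)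
    (D : X → ℕ → Bool) (x : X) : G × ℕ → Bool := fun p => D (f.act p.1 x) p.2

theorem measurable_codeMap {G X : Type*} [Group G] [MeasurableSpace X] {μ : Measure X}
    (f : PMP G X μ) (D : X → ℕ → Bool) (hD : Measurable D) : Measurable (codeMap f D) := by
  refine measurable_pi_lambda _ fun p => ?_
  exact (measurable_pi_apply p.2).comp (hD.comp (f.measurable p.1))

open Classical in
theorem measureReal_mem_eq_sum {Z α : Type*} [MeasurableSpace Z] [Fintype α] [MeasurableSpace α]
    [MeasurableSingletonClass α] (ρ : Measure Z) [IsFiniteMeasure ρ]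
    (E : Z → α) (hE : Measurable E) (U : Set α) :
    ρ.real {z | E z ∈ U} = ∑ a ∈ Finset.univ.filter (· ∈ U), ρ.real {z | E z = a} := by
  have : {z | E z ∈ U} = ⋃ a ∈ Finset.univ.filter (· ∈ U), E ⁻¹' {a} := by
    ext z; simp
  rw [this, measureReal_biUnion_finset]
  · rfl
  · intro a _ b _ hab
    exact Disjoint.preimage _ (by simpa using hab)
  · intro a _
    exact hE (measurableSet_singleton a)

theorem exists_approx_closed {G X Y : Type*} [Group G] [MeasurableSpace X] [MeasurableSpace Y]
    {μ : Measure X} {ν : Measure Y} [IsProbabilityMeasure μ] [IsProbabilityMeasure ν]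
    (f : PMP G X μ) (h : PMP G Y ν) (hwc : WeaklyContains f h)
    (e : Y → ℕ → Bool) (he : Measurable e) (J : Finset (G × ℕ))
    (hJ : ∀ p ∈ J, ((1 : G), p.2) ∈ J) (ε : ℝ) (hε : 0 < ε) :
    ∃ D : X → ℕ → Bool, Measurable D ∧ ∀ U : Set (J → Bool),
      |μ.real {x | J.restrict (codeMap f D x) ∈ U} -
        ν.real {y | J.restrict (codeMap h e y) ∈ U}| ≤ ε := by
  classical
  set C : Y → (J → Bool) := fun y => J.restrict (codeMap h e y) with hCdef
  have hC : Measurable C := (Finset.measurable_restrict J).comp (measurable_codeMap h e he)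
  set N : ℝ := (Fintype.card (J → Bool) : ℝ) with hN
  set M : ℝ := N + (J.card : ℝ) * (N * N) + 1 with hM
  have hN0 : 0 ≤ N := by positivity
  have hM0 : 0 < M := by positivity
  set δ := ε / M with hδ
  have hδ0 : 0 < δ := div_pos hε hM0
  obtain ⟨D', hD', H⟩ := hwc.finite C hC (insert 1 (J.image Prod.fst)) δ hδ0
  set D : X → ℕ → Bool := fun x i => if hi : ((1 : G), i) ∈ J then D' x ⟨(1, i), hi⟩ else false
    with hDdef
  have hD : Measurable D := by
    refine measurable_pi_lambda _ fun i => ?_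
    by_cases hi : ((1 : G), i) ∈ J
    · simp only [hDdef, hi, dite_true]
      exact (measurable_pi_apply _).comp hD'
    · simp only [hDdef, hi, dite_false]
      exact measurable_const
  refine ⟨D, hD, fun U => ?_⟩
  -- singletons
  have hsing : ∀ a, |μ.real {x | D' x = a} - ν.real {y | C y = a}| ≤ δ := by
    intro a
    have := H a a 1 (Finset.mem_insert_self _ _)
    simpa only [f.act_one, h.act_one, and_self] using this
  have hU1 : |μ.real {x | D' x ∈ U} - ν.real {y | C y ∈ U}| ≤ N * δ := by
    have e1 := measureReal_mem_eq_sum μ D' hD' U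
    have e2 := measureReal_mem_eq_sum ν C hC U
    rw [e1, e2, ← Finset.sum_sub_distrib]
    refine (Finset.abs_sum_le_sum_abs _ _).trans ?_
    calc _ ≤ ∑ a ∈ Finset.univ.filter (· ∈ U), δ := Finset.sum_le_sum fun a _ => hsing a
      _ ≤ ∑ a : (J → Bool), δ :=
        Finset.sum_le_sum_of_subset_of_nonneg (Finset.filter_subset _ _) fun _ _ _ => hδ0.le
      _ = N * δ := by rw [Finset.sum_const, nsmul_eq_mul, hN, Finset.card_univ]
  -- the inconsistent set
  set Bad : J → Set X := fun p => {x | D' x p ≠ D' (f.act p.1.1 x) ⟨(1, p.1.2), hJ p.1 p.2⟩}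
    with hBad
  have hbad : ∀ p : J, μ.real (Bad p) ≤ (N * N) * δ := by
    intro p
    set P : Finset ((J → Bool) × (J → Bool)) :=
      Finset.univ.filter fun q => q.1 p ≠ q.2 ⟨(1, p.1.2), hJ p.1 p.2⟩ with hP
    have hsub : Bad p ⊆ ⋃ q ∈ P, {x | D' x = q.1 ∧ D' (f.act p.1.1 x) = q.2} := by
      intro x hx
      refine mem_biUnion (x := (D' x, D' (f.act p.1.1 x))) ?_ ⟨rfl, rfl⟩
      have hx' : D' x p ≠ D' (f.act p.1.1 x) ⟨(1, p.1.2), hJ p.1 p.2⟩ := hx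
      simpa [hP] using hx'
    have hz : ∀ q ∈ P, μ.real {x | D' x = q.1 ∧ D' (f.act p.1.1 x) = q.2} ≤ δ := by
      intro q hq
      have h1 := H q.1 q.2 p.1.1
        (Finset.mem_insert_of_mem (Finset.mem_image_of_mem _ p.2))
      have h2 : {y | C y = q.1 ∧ C (h.act p.1.1 y) = q.2} = ∅ := by
        ext y
        simp only [mem_empty_iff_false, iff_false]
        rintro ⟨g1, g2⟩
        have hq' := (Finset.mem_filter.1 hq).2
        apply hq'
        rw [← g1, ← g2]
        simp [hCdef, codeMap, h.act_one]
      rw [h2, measureReal_empty, sub_zero] at h1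
      exact (le_abs_self _).trans h1
    calc μ.real (Bad p) ≤ μ.real (⋃ q ∈ P, {x | D' x = q.1 ∧ D' (f.act p.1.1 x) = q.2}) :=
          measureReal_mono hsub (measure_ne_top _ _)
      _ ≤ ∑ q ∈ P, μ.real {x | D' x = q.1 ∧ D' (f.act p.1.1 x) = q.2} :=
          measureReal_biUnion_finset_le _ _
      _ ≤ ∑ q ∈ P, δ := Finset.sum_le_sum hz
      _ ≤ ∑ q : (J → Bool) × (J → Bool), δ :=
        Finset.sum_le_sum_of_subset_of_nonneg (Finset.filter_subset _ _) fun _ _ _ => hδ0.le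
      _ = (N * N) * δ := by
        rw [Finset.sum_const, nsmul_eq_mul, hN, Finset.card_univ, Fintype.card_prod]; push_cast; rfl
  have hbadU : μ.real (⋃ p, Bad p) ≤ J.card * ((N * N) * δ) := by
    calc μ.real (⋃ p, Bad p) ≤ ∑ p, μ.real (Bad p) := measureReal_iUnion_fintype_le _
      _ ≤ ∑ _p : J, (N * N) * δ := Finset.sum_le_sum fun p _ => hbad p
      _ = _ := by rw [Finset.sum_const, nsmul_eq_mul, Finset.card_univ, Fintype.card_coe]
  have heq : ∀ x, x ∉ ⋃ p, Bad p → J.restrict (codeMap f D x) = D' x := by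
    intro x hx
    funext p
    have h1 : ¬ (D' x p ≠ D' (f.act p.1.1 x) ⟨(1, p.1.2), hJ p.1 p.2⟩) :=
      fun h' => hx (mem_iUnion.2 ⟨p, h'⟩)
    rw [not_not.1 h1]
    simp only [Finset.restrict, codeMap, hDdef]
    rw [dif_pos (hJ p.1 p.2)]
  have hU2 : |μ.real {x | J.restrict (codeMap f D x) ∈ U} - μ.real {x | D' x ∈ U}| ≤
      J.card * ((N * N) * δ) := by
    refine (abs_real_sub_le_of_subset μ _ _ (⋃ p, Bad p) ?_ ?_).trans hbadU
    · intro x hx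
      by_cases hb : x ∈ ⋃ p, Bad p
      · exact Or.inr hb
      · left
        change D' x ∈ U
        rw [← heq x hb]; exact hx
    · intro x hx
      by_cases hb : x ∈ ⋃ p, Bad p
      · exact Or.inr hb
      · left
        change J.restrict (codeMap f D x) ∈ U
        rw [heq x hb]; exact hx
  have htot : N * δ + J.card * ((N * N) * δ) ≤ ε := by
    have : ε = M * δ := by rw [hδ]; field_simp
    rw [this, hM]
    nlinarith
  have b1 := abs_le.1 hU1
  have b2 := abs_le.1 hU2
  exact abs_le.2 ⟨by linarith [b1.1, b2.1], by linarith [b1.2, b2.2]⟩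

theorem exists_approx {G X Y : Type*} [Group G] [MeasurableSpace X] [MeasurableSpace Y]
    {μ : Measure X} {ν : Measure Y} [IsProbabilityMeasure μ] [IsProbabilityMeasure ν]
    (f : PMP G X μ) (h : PMP G Y ν) (hwc : WeaklyContains f h)
    (e : Y → ℕ → Bool) (he : Measurable e) (J : Finset (G × ℕ)) (ε : ℝ) (hε : 0 < ε) :
    ∃ D : X → ℕ → Bool, Measurable D ∧ ∀ I ⊆ J, ∀ U : Set (I → Bool),
      |μ.real {x | I.restrict (codeMap f D x) ∈ U} -
        ν.real {y | I.restrict (codeMap h e y) ∈ U}| ≤ ε := by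
  classical
  obtain ⟨D, hD, H⟩ := exists_approx_closed f h hwc e he
    (J ∪ J.image fun p => ((1 : G), p.2)) (by
      intro p hp
      rcases Finset.mem_union.1 hp with hp | hp
      · exact Finset.mem_union_right _ (Finset.mem_image_of_mem _ hp)
      · obtain ⟨q, hq, rfl⟩ := Finset.mem_image.1 hp
        exact Finset.mem_union_right _ hp) ε hε
  refine ⟨D, hD, fun I hI U => ?_⟩
  exact H ((Finset.restrict₂ (π := fun _ => Bool) (hI.trans Finset.subset_union_left)) ⁻¹' U)

/-- The shift on the symbolic space. -/
def shiftMap {G : Type*} [Group G] (γ : G) (k : G × ℕ → Bool) : G × ℕ → Bool :=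
  fun p => k (p.1 * γ, p.2)

theorem continuous_shiftMap {G : Type*} [Group G] (γ : G) : Continuous (shiftMap γ) :=
  continuous_pi fun p => continuous_apply (p.1 * γ, p.2)

theorem codeMap_act {G X : Type*} [Group G] [MeasurableSpace X] {μ : Measure X} (f : PMP G X μ)
    (D : X → ℕ → Bool) (γ : G) (x : X) :
    codeMap f D (f.act γ x) = shiftMap γ (codeMap f D x) := by
  funext p
  simp only [codeMap, shiftMap, f.act_mul]

/-- Recovering the original action from its faithful coding. -/
theorem decode_factor {G X : Type*} [Group G] [Countable G] [MeasurableSpace X]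
    [StandardBorelSpace X] {μ : Measure X}
    (f : PMP G X μ) (e : X → ℕ → Bool) (he : Measurable e) (e' : (ℕ → Bool) → X)
    (he' : Measurable e') (hee : ∀ x, e' (e x) = x) (ν : Measure (G × ℕ → Bool))
    (hν : ν = μ.map (codeMap f e)) :
    Measurable (fun k : G × ℕ → Bool => e' fun i => k (1, i)) ∧
    ν.map (fun k => e' fun i => k (1, i)) = μ ∧
    ∀ γ, ∀ᵐ k ∂ν, (e' fun i => shiftMap γ k (1, i)) = f.act γ (e' fun i => k (1, i)) := by
  have hq : Measurable (fun k : G × ℕ → Bool => e' fun i => k (1, i)) :=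
    he'.comp (measurable_pi_lambda _ fun i => measurable_pi_apply _)
  have hcm := measurable_codeMap f e he
  have hdec : ∀ x, (e' fun i => codeMap f e x (1, i)) = x := by
    intro x
    simp only [codeMap, f.act_one]
    exact hee x
  refine ⟨hq, ?_, fun γ => ?_⟩
  · rw [hν, Measure.map_map hq hcm]
    have : (fun k : G × ℕ → Bool => e' fun i => k (1, i)) ∘ codeMap f e = id := funext hdec
    rw [this, Measure.map_id]
  · rw [hν]
    refine (ae_map_iff (p := fun k => (e' fun i => shiftMap γ k (1, i)) =
      f.act γ (e' fun i => k (1, i))) hcm.aemeasurable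
      (measurableSet_eq_fun (hq.comp (continuous_shiftMap γ).measurable)
        ((f.measurable γ).comp hq))).2 ?_
    refine Eventually.of_forall fun x => ?_
    rw [← codeMap_act, hdec, hdec]

theorem main_countable {G X : Type*} [Group G] [Countable G]
    [MeasurableSpace X] [StandardBorelSpace X]
    {μ : Measure X} [IsProbabilityMeasure μ]
    (f h : PMP G X μ) (hwc : WeaklyContains f h) :
    ∃ g : PMP G X μ, WeaklyEquivalent g f ∧
      ∃ π : X → X, Measurable π ∧ μ.map π = μ ∧
        ∀ γ : G, ∀ᵐ x ∂μ, π (g.act γ x) = h.act γ (π x) := by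
  classical
  have hXne : Nonempty X := nonempty_of_isProbabilityMeasure μ
  obtain ⟨e, he, heinj⟩ := MeasurableSpace.measurable_injection_nat_bool_of_countablySeparated X
  obtain ⟨e', he', hcomp⟩ := (he.measurableEmbedding heinj).exists_measurable_extend
    (g := (id : X → X)) measurable_id (fun _ => hXne)
  have hee : ∀ x, e' (e x) = x := fun x => congrFun hcomp x
  choose D hD HD using fun i : Finset (G × ℕ) × ℕ =>
    exists_approx f h hwc e he i.1 (1 / ((i.2 : ℝ) + 1)) (by positivity)
  let Ψ : Finset (G × ℕ) × ℕ → X → (G × ℕ → Bool) × (G × ℕ → Bool) :=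
    fun i x => (codeMap f e x, codeMap f (D i) x)
  have hΨ : ∀ i, Measurable (Ψ i) := fun i =>
    (measurable_codeMap f e he).prodMk (measurable_codeMap f (D i) (hD i))
  let P : Finset (G × ℕ) × ℕ → ProbabilityMeasure ((G × ℕ → Bool) × (G × ℕ → Bool)) :=
    fun i => ⟨μ.map (Ψ i), Measure.isProbabilityMeasure_map (hΨ i).aemeasurable⟩
  let 𝒰 : Ultrafilter (Finset (G × ℕ) × ℕ) := Ultrafilter.of atTop
  have h𝒰 : (𝒰 : Filter (Finset (G × ℕ) × ℕ)) ≤ atTop := Ultrafilter.of_le _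
  obtain ⟨L, -, hL⟩ := (isCompact_univ
    (X := ProbabilityMeasure ((G × ℕ → Bool) × (G × ℕ → Bool)))).ultrafilter_le_nhds
      (𝒰.map P) (by simp)
  have hlim : Tendsto P 𝒰 (𝓝 L) := hL
  set ν : Measure ((G × ℕ → Bool) × (G × ℕ → Bool)) := (L : Measure ((G × ℕ → Bool) × (G × ℕ → Bool))) with hν
  -- convergence on clopen sets
  have hclopen : ∀ E : Set ((G × ℕ → Bool) × (G × ℕ → Bool)), IsClopen E →
      Tendsto (fun i => μ.real (Ψ i ⁻¹' E)) 𝒰 (𝓝 (ν.real E)) := by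
    intro E hE
    have h1 := ProbabilityMeasure.tendsto_measure_of_isClopen_of_tendsto hlim hE
    have h2 := (NNReal.continuous_coe.tendsto _).comp h1
    refine h2.congr fun i => ?_
    change ((μ.map (Ψ i)) E).toReal = (μ (Ψ i ⁻¹' E)).toReal
    rw [Measure.map_apply (hΨ i) hE.1.measurableSet]
  -- the shift action
  let sh : G → (G × ℕ → Bool) × (G × ℕ → Bool) → (G × ℕ → Bool) × (G × ℕ → Bool) :=
    fun γ k => (shiftMap γ k.1, shiftMap γ k.2)
  have hshc : ∀ γ, Continuous (sh γ) := fun γ =>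
    ((continuous_shiftMap γ).comp continuous_fst).prodMk
      ((continuous_shiftMap γ).comp continuous_snd)
  have hΨe : ∀ i γ x, Ψ i (f.act γ x) = sh γ (Ψ i x) := by
    intro i γ x
    exact Prod.ext (codeMap_act f e γ x) (codeMap_act f (D i) γ x)
  have hinv : ∀ γ, ν.map (sh γ) = ν := by
    intro γ
    have h1 := ProbabilityMeasure.tendsto_map_of_tendsto_of_continuous P L hlim (hshc γ)
    have h2 : (fun i => (P i).map (hshc γ).measurable.aemeasurable) = P := by
      funext i
      apply Subtype.ext
      change (μ.map (Ψ i)).map (sh γ) = μ.map (Ψ i)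
      rw [Measure.map_map (hshc γ).measurable (hΨ i)]
      have : sh γ ∘ Ψ i = Ψ i ∘ f.act γ := funext fun x => (hΨe i γ x).symm
      rw [this, ← Measure.map_map (hΨ i) (f.measurable γ), (f.preserves γ).map_eq]
    rw [h2] at h1
    have h3 := tendsto_nhds_unique h1 hlim
    exact congrArg Subtype.val h3
  let a : PMP G ((G × ℕ → Bool) × (G × ℕ → Bool)) ν :=
    { act := sh
      measurable := fun γ => (hshc γ).measurable
      preserves := fun γ => ⟨(hshc γ).measurable, hinv γ⟩
      act_one := fun k => by
        refine Prod.ext ?_ ?_ <;> funext p <;> simp [sh, shiftMap]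
      act_mul := fun γ₁ γ₂ k => by
        refine Prod.ext ?_ ?_ <;> funext p <;> simp [sh, shiftMap, mul_assoc] }
  have hfa : WeaklyContains f a :=
    weaklyContains_of_limit f a hshc (𝒰 : Filter _) Ψ hΨ hΨe hclopen
  -- marginals
  have hfst : ν.map Prod.fst = μ.map (codeMap f e) := by
    have h1 := ProbabilityMeasure.tendsto_map_of_tendsto_of_continuous P L hlim continuous_fst
    let Q : ProbabilityMeasure (G × ℕ → Bool) := ⟨μ.map (codeMap f e),
      Measure.isProbabilityMeasure_map (measurable_codeMap f e he).aemeasurable⟩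
    have h2 : (fun i => (P i).map (continuous_fst (X := G × ℕ → Bool)
        (Y := G × ℕ → Bool)).measurable.aemeasurable) = fun _ => Q := by
      funext i
      apply Subtype.ext
      change (μ.map (Ψ i)).map Prod.fst = μ.map (codeMap f e)
      rw [Measure.map_map measurable_fst (hΨ i)]
      rfl
    rw [h2] at h1
    have h3 := tendsto_nhds_unique h1 tendsto_const_nhds
    exact congrArg Subtype.val h3
  have hsnd : ν.map Prod.snd = μ.map (codeMap h e) := by
    have hcm := measurable_codeMap h e he
    have hpr : IsProbabilityMeasure (μ.map (codeMap h e)) :=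
      Measure.isProbabilityMeasure_map hcm.aemeasurable
    have hpI : ∀ I : Finset (G × ℕ),
        IsFiniteMeasure ((μ.map (codeMap h e)).map I.restrict) := fun I => inferInstance
    refine IsProjectiveLimit.unique
      (P := fun I : Finset (G × ℕ) => (μ.map (codeMap h e)).map I.restrict) ?_ (fun I => rfl)
    intro I
    ext U hU
    have hrm := Finset.measurable_restrict (X := fun _ : G × ℕ => Bool) I
    rw [Measure.map_apply hrm hU, Measure.map_apply measurable_snd (hrm hU),
      Measure.map_apply hrm hU, Measure.map_apply hcm (hrm hU)]
    have hEc : IsClopen (Prod.snd ⁻¹' (I.restrict ⁻¹' U) :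
        Set ((G × ℕ → Bool) × (G × ℕ → Bool))) := by
      have hc : Continuous (I.restrict (π := fun _ : G × ℕ => Bool)) :=
        continuous_pi fun p => continuous_apply _
      exact ((isClopen_discrete U).preimage hc).preimage continuous_snd
    have h1 := hclopen _ hEc
    have h2 : Tendsto (fun i : Finset (G × ℕ) × ℕ => μ.real
        (Ψ i ⁻¹' (Prod.snd ⁻¹' (I.restrict ⁻¹' U)))) 𝒰
        (𝓝 (μ.real (codeMap h e ⁻¹' (I.restrict ⁻¹' U)))) := by
      refine Tendsto.mono_left ?_ h𝒰
      rw [tendsto_iff_dist_tendsto_zero]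
      have h3 : Tendsto (fun i : Finset (G × ℕ) × ℕ => 1 / ((i.2 : ℝ) + 1)) atTop (𝓝 0) := by
        refine tendsto_one_div_add_atTop_nhds_zero_nat.comp ?_
        rw [← prod_atTop_atTop_eq]
        exact tendsto_snd
      refine squeeze_zero' (Eventually.of_forall fun i => dist_nonneg) ?_ h3
      filter_upwards [eventually_ge_atTop ((I, 0) : Finset (G × ℕ) × ℕ)] with i hi
      rw [Real.dist_eq]
      exact HD i I hi.1 U
    have h4 := tendsto_nhds_unique h1 h2
    exact (measureReal_eq_measureReal_iff).1 h4
  obtain ⟨hq, hqf, hqfe⟩ := decode_factor f e he e' he' hee _ hfst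
  obtain ⟨-, hqh, hqhe⟩ := decode_factor h e he e' he' hee _ hsnd
  set q : (G × ℕ → Bool) → X := fun k => e' fun i => k (1, i) with hqdef
  let p : (G × ℕ → Bool) × (G × ℕ → Bool) → X := fun k => q k.1
  let r : (G × ℕ → Bool) × (G × ℕ → Bool) → X := fun k => q k.2
  have hp : Measurable p := hq.comp measurable_fst
  have hr : Measurable r := hq.comp measurable_snd
  have hpm : ν.map p = μ := by
    have : ν.map p = (ν.map Prod.fst).map q := by
      rw [Measure.map_map hq measurable_fst]; rfl
    rw [this]; exact hqf
  have hrm : ν.map r = μ := by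
    have : ν.map r = (ν.map Prod.snd).map q := by
      rw [Measure.map_map hq measurable_snd]; rfl
    rw [this]; exact hqh
  have hpe : ∀ γ, ∀ᵐ k ∂ν, p (a.act γ k) = f.act γ (p k) := fun γ =>
    ae_of_ae_map measurable_fst.aemeasurable (hqfe γ)
  have hre : ∀ γ, ∀ᵐ k ∂ν, r (a.act γ k) = h.act γ (r k) := fun γ =>
    ae_of_ae_map measurable_snd.aemeasurable (hqhe γ)
  -- atoms
  choose κ hκ using fun x : X => (isCompact_univ
    (X := (G × ℕ → Bool) × (G × ℕ → Bool))).ultrafilter_le_nhds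
      (𝒰.map fun i => Ψ i x) (by simp)
  have hκlim : ∀ x, Tendsto (fun i => Ψ i x) 𝒰 (𝓝 (κ x)) := fun x => (hκ x).2
  have hκp : ∀ x, p (κ x) = x := by
    intro x
    have h1 : Tendsto (fun i => (Ψ i x).1) 𝒰 (𝓝 (κ x).1) :=
      (continuous_fst.tendsto _).comp (hκlim x)
    have h2 : (κ x).1 = codeMap f e x := tendsto_nhds_unique h1 tendsto_const_nhds
    change q (κ x).1 = x
    rw [h2]
    simp only [hqdef, codeMap, f.act_one]
    exact hee x
  have hκm : ∀ x, μ {x} ≤ ν {κ x} := by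
    intro x
    rw [Set.measure_eq_iInf_isOpen {κ x} ν]
    refine le_iInf fun V => le_iInf fun hV => le_iInf fun hVo => ?_
    obtain ⟨W, hW, hxW, hWV⟩ := isTopologicalBasis_isClopen.exists_subset_of_mem_open
      (hV (mem_singleton _)) hVo
    refine le_trans ?_ (measure_mono hWV)
    have h1 := hclopen W hW
    have h2 : μ.real {x} ≤ ν.real W := by
      refine ge_of_tendsto h1 ?_
      filter_upwards [(hκlim x).eventually (hW.2.mem_nhds hxW)] with i hi
      exact measureReal_mono (singleton_subset_iff.2 hi)
    exact (ENNReal.toReal_le_toReal (measure_ne_top _ _) (measure_ne_top _ _)).1 h2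
  obtain ⟨Θ, Θ', hΘ, hΘ', hΘm, hΘm', hi, hi'⟩ :=
    exists_iso_extension μ ν p hp hpm κ fun x _ => ⟨hκp x, hκm x⟩
  obtain ⟨g, hg1, hg2⟩ := exists_transport a Θ Θ' hΘ hΘ' hΘm hΘm' hi hi'
  have hΘmp : MeasurePreserving Θ μ ν := ⟨hΘ, hΘm⟩
  refine ⟨g, ⟨?_, ?_⟩, fun x => r (Θ x), hr.comp hΘ, ?_, ?_⟩
  · exact (weaklyContains_of_factor g a Θ hΘ hΘm hg1).trans
      (weaklyContains_of_factor a f p hp hpm hpe)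
  · exact hfa.trans (weaklyContains_of_factor a g Θ' hΘ' hΘm' hg2)
  · have : μ.map (fun x => r (Θ x)) = (μ.map Θ).map r := by
      rw [Measure.map_map hr hΘ]; rfl
    rw [this, hΘm, hrm]
  · intro γ
    filter_upwards [hg1 γ, hΘmp.quasiMeasurePreserving.ae (hre γ)] with x h1 h2
    rw [h1, h2]

end Helpers

theorem exists_weakly_equivalent_containing_factor
    {S X : Type} [Fintype S] [MeasurableSpace X] [StandardBorelSpace X]
    {μ : Measure X} [IsProbabilityMeasure μ]
    (f h : PMP (FreeGroup S) X μ) (hwc : WeaklyContains f h) :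
    ∃ g : PMP (FreeGroup S) X μ, WeaklyEquivalent g f ∧
      ∃ π : X → X, Measurable π ∧ μ.map π = μ ∧
        ∀ γ : FreeGroup S, ∀ᵐ x ∂μ, π (g.act γ x) = h.act γ (π x) := by
  have hc : Countable (FreeGroup S) := by
    unfold FreeGroup
    infer_instance
  exact main_countable f h hwc
end

section
/- Let α and δ be unitary representations of a countable group Γ on a separable complex Hilbert space H, and suppose α weakly contains δ in the sense of Zimmer. Then there exists a unitary representation β of Γ on a complex Hilbert space such that β is weakly equivalent to α in the sense of Zimmer and β contains δ, i.e. there is a closed β(Γ)-invariant subspace K of the space of β such that the restriction of β to K is unitarily equivalent to δ. -/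
open scoped InnerProductSpace

/-- `β` weakly contains `α` in the sense of Zimmer. -/
def ZimmerWeaklyContains {Γ : Type*} [Group Γ]
    {Ha : Type*} [NormedAddCommGroup Ha] [InnerProductSpace ℂ Ha]
    {Hb : Type*} [NormedAddCommGroup Hb] [InnerProductSpace ℂ Hb]
    (β : Γ →* (Hb ≃ₗᵢ[ℂ] Hb)) (α : Γ →* (Ha ≃ₗᵢ[ℂ] Ha)) : Prop :=
  ∀ n : ℕ, ∀ v : Fin n → Ha, Orthonormal ℂ v →
    ∀ F : Finset Γ, ∀ ε : ℝ, 0 < ε →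
      ∃ w : Fin n → Hb, Orthonormal ℂ w ∧
        ∀ i j : Fin n, ∀ γ ∈ F,
          ‖(⟪α γ (v i), v j⟫_ℂ) - (⟪β γ (w i), w j⟫_ℂ)‖ < ε

/-- Weak equivalence in the sense of Zimmer. -/
def ZimmerWeaklyEquivalent {Γ : Type*} [Group Γ]
    {Ha : Type*} [NormedAddCommGroup Ha] [InnerProductSpace ℂ Ha]
    {Hb : Type*} [NormedAddCommGroup Hb] [InnerProductSpace ℂ Hb]
    (α : Γ →* (Ha ≃ₗᵢ[ℂ] Ha)) (β : Γ →* (Hb ≃ₗᵢ[ℂ] Hb)) : Prop :=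
  ZimmerWeaklyContains α β ∧ ZimmerWeaklyContains β α

/-- The compact set `K_{F,n}(α)`: the closure of the set of matrices of inner products
`⟨α(γ)v_i, v_j⟩` over all orthonormal systems `v_1, …, v_n`. -/
def KSet {Γ : Type*} [Group Γ]
    {H : Type*} [NormedAddCommGroup H] [InnerProductSpace ℂ H]
    (α : Γ →* (H ≃ₗᵢ[ℂ] H)) (F : Finset Γ) (n : ℕ) :
    Set (F × Fin n × Fin n → ℂ) :=
  closure {p | ∃ v : Fin n → H, Orthonormal ℂ v ∧
    p = fun q => ⟪α ↑q.1 (v q.2.1), v q.2.2⟫_ℂ}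

/-- A unitary representation of `Γ` on some complex Hilbert space. -/
structure URep (Γ : Type) [Group Γ] where
  H : Type
  [ng : NormedAddCommGroup H]
  [ips : InnerProductSpace ℂ H]
  [cpl : CompleteSpace H]
  ρ : Γ →* (H ≃ₗᵢ[ℂ] H)

attribute [instance] URep.ng URep.ips URep.cpl


open Filter Topology

theorem exists_hilbertization {Γ : Type} [Group Γ] {V : Type} [AddCommGroup V] [Module ℂ V]
    (c : PreInnerProductSpace.Core ℂ V) (ρ : Γ →* (V ≃ₗ[ℂ] V))
    (hρ : ∀ γ x y, c.inner (ρ γ x) (ρ γ y) = c.inner x y) :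
    ∃ (β : URep Γ) (j : V →ₗ[ℂ] β.H), DenseRange j ∧
      (∀ x y, ⟪j x, j y⟫_ℂ = c.inner x y) ∧ (∀ γ x, β.ρ γ (j x) = j (ρ γ x)) := by
  let : SeminormedAddCommGroup V := @InnerProductSpace.Core.toSeminormedAddCommGroup ℂ V _ _ _ c
  let : InnerProductSpace ℂ V := InnerProductSpace.ofCore c
  let j : V →ₗ[ℂ] UniformSpace.Completion V :=
    (UniformSpace.Completion.toComplₗᵢ (𝕜 := ℂ) (E := V)).toLinearMap
  have hd : DenseRange j := UniformSpace.Completion.denseRange_coe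
  have hj : ∀ x y, ⟪j x, j y⟫_ℂ = c.inner x y := fun x y =>
    UniformSpace.Completion.inner_coe x y
  have hn : ∀ γ x, ‖j (ρ γ x)‖ = ‖j x‖ := by
    intro γ x
    rw [@norm_eq_sqrt_re_inner ℂ, @norm_eq_sqrt_re_inner ℂ, hj, hj, hρ]
  let U : Γ → (UniformSpace.Completion V ≃ₗᵢ[ℂ] UniformSpace.Completion V) := fun γ =>
    (ρ γ).extendOfIsometry j j hd hd (hn γ)
  have hU : ∀ γ x, U γ (j x) = j (ρ γ x) := fun γ x =>
    (LinearEquiv.extendOfIsometry_apply _ _ _ hd hd (hn γ) _).trans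
      (LinearMap.extendOfNorm_eq hd ⟨1, fun y => by simpa using (hn γ y).le⟩ x)
  let R : Γ →* (UniformSpace.Completion V ≃ₗᵢ[ℂ] UniformSpace.Completion V) :=
    { toFun := U
      map_one' := by
        ext x
        refine hd.induction_on (p := fun x => U 1 x = x) x
          (isClosed_eq (U 1).continuous continuous_id) ?_
        intro a; rw [hU]; simp
      map_mul' := by
        intro g h
        ext x
        refine hd.induction_on (p := fun x => U (g * h) x = U g (U h x)) x
          (isClosed_eq (U _).continuous ((U g).continuous.comp (U h).continuous)) ?_
        intro a; rw [hU, hU, hU]; simp }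
  exact ⟨⟨UniformSpace.Completion V, R⟩, j, hd, hj, hU⟩

theorem tendsto_inner_zero {T H : Type*} [NormedAddCommGroup H] [InnerProductSpace ℂ H]
    {l : Filter T} {x y : T → H} {c : ℝ} (hx : Tendsto x l (𝓝 0))
    (hy : Tendsto (fun t => ‖y t‖) l (𝓝 c)) : Tendsto (fun t => ⟪x t, y t⟫_ℂ) l (𝓝 0) := by
  have h := (tendsto_zero_iff_norm_tendsto_zero.1 hx).mul hy
  rw [zero_mul] at h
  exact squeeze_zero_norm (fun t => norm_inner_le_norm _ _) h

theorem tendsto_inner_zero' {T H : Type*} [NormedAddCommGroup H] [InnerProductSpace ℂ H]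
    {l : Filter T} {x y : T → H} {c : ℝ} (hx : Tendsto x l (𝓝 0))
    (hy : Tendsto (fun t => ‖y t‖) l (𝓝 c)) : Tendsto (fun t => ⟪y t, x t⟫_ℂ) l (𝓝 0) := by
  have h := hy.mul (tendsto_zero_iff_norm_tendsto_zero.1 hx)
  rw [mul_zero] at h
  exact squeeze_zero_norm (fun t => norm_inner_le_norm _ _) h

theorem tendsto_norm_of_close {T H : Type*} [NormedAddCommGroup H]
    {l : Filter T} {x y : T → H} {c : ℝ} (hx : Tendsto (fun t => x t - y t) l (𝓝 0))
    (hy : Tendsto (fun t => ‖y t‖) l (𝓝 c)) : Tendsto (fun t => ‖x t‖) l (𝓝 c) := by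
  have h : Tendsto (fun t => ‖x t‖ - ‖y t‖) l (𝓝 0) :=
    squeeze_zero_norm (fun t => abs_norm_sub_norm_le _ _)
      (tendsto_zero_iff_norm_tendsto_zero.1 hx)
  simpa using h.add hy

theorem tendsto_norm_of_inner_one {T H : Type*} [NormedAddCommGroup H] [InnerProductSpace ℂ H]
    {l : Filter T} {u : T → H} (hu : Tendsto (fun t => ⟪u t, u t⟫_ℂ) l (𝓝 1)) :
    Tendsto (fun t => ‖u t‖) l (𝓝 1) := by
  have h2 := ((Complex.continuous_re.tendsto _).comp hu).sqrt
  simp only [Complex.one_re, Real.sqrt_one] at h2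
  refine h2.congr fun t => ?_
  rw [@norm_eq_sqrt_re_inner ℂ]; rfl

theorem gs_close {T H : Type*} [NormedAddCommGroup H] [InnerProductSpace ℂ H] {l : Filter T}
    {n : ℕ} (u : T → Fin n → H)
    (hu : ∀ i j, Tendsto (fun t => ⟪u t i, u t j⟫_ℂ) l (𝓝 (if i = j then 1 else 0))) (k : Fin n) :
    Tendsto (fun t => InnerProductSpace.gramSchmidt ℂ (u t) k - u t k) l (𝓝 0) := by
  have hun : ∀ i, Tendsto (fun t => ‖u t i‖) l (𝓝 1) := fun i =>
    tendsto_norm_of_inner_one (by have := hu i i; rwa [if_pos rfl] at this)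
  induction k using WellFoundedLT.induction with
  | ind k ih =>
    have key : Tendsto (fun t => - ∑ i ∈ Finset.Iio k,
        (⟪InnerProductSpace.gramSchmidt ℂ (u t) i, u t k⟫_ℂ /
          ((‖InnerProductSpace.gramSchmidt ℂ (u t) i‖ : ℝ) : ℂ) ^ 2) •
            InnerProductSpace.gramSchmidt ℂ (u t) i) l (𝓝 (- ∑ i ∈ Finset.Iio k, 0)) := by
      refine (tendsto_finsetSum _ fun i hi => ?_).neg
      have hik : i < k := Finset.mem_Iio.1 hi
      have h1 := ih i hik
      have h2 := tendsto_norm_of_close h1 (hun i)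
      have h3 : Tendsto (fun t => ⟪InnerProductSpace.gramSchmidt ℂ (u t) i, u t k⟫_ℂ) l (𝓝 0) := by
        have h4 := (tendsto_inner_zero h1 (hun k)).add (hu i k)
        rw [if_neg hik.ne, add_zero] at h4
        refine h4.congr fun t => ?_
        rw [← inner_add_left, sub_add_cancel]
      have h5 := h3.div (((Complex.continuous_ofReal.tendsto _).comp h2).pow 2) (by simp)
      rw [zero_div] at h5
      have h6 := (tendsto_zero_iff_norm_tendsto_zero.1 h5).mul h2
      rw [zero_mul] at h6
      rw [tendsto_zero_iff_norm_tendsto_zero]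
      refine h6.congr fun t => ?_
      rw [norm_smul]; rfl
    simp only [Finset.sum_const_zero, neg_zero] at key
    refine key.congr fun t => ?_
    have hdef := InnerProductSpace.gramSchmidt_def'' ℂ (u t) k
    rw [eq_sub_iff_add_eq, neg_add_eq_iff_eq_add, add_comm]
    exact hdef

theorem exists_orthonormal_close {T H : Type*} [NormedAddCommGroup H] [InnerProductSpace ℂ H]
    {l : Filter T} {n : ℕ} (u : T → Fin n → H)
    (hu : ∀ i j, Tendsto (fun t => ⟪u t i, u t j⟫_ℂ) l (𝓝 (if i = j then 1 else 0))) :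
    ∃ w : T → Fin n → H, (∀ᶠ t in l, Orthonormal ℂ (w t)) ∧
      ∀ k, Tendsto (fun t => w t k - u t k) l (𝓝 0) := by
  have hg := gs_close u hu
  have hun : ∀ i, Tendsto (fun t => ‖u t i‖) l (𝓝 1) := fun i =>
    tendsto_norm_of_inner_one (by have := hu i i; rwa [if_pos rfl] at this)
  have hgn := fun i => tendsto_norm_of_close (hg i) (hun i)
  have hne : ∀ᶠ t in l, ∀ i, InnerProductSpace.gramSchmidt ℂ (u t) i ≠ 0 := by
    rw [eventually_all]
    intro i
    filter_upwards [(hgn i).eventually_ne one_ne_zero] with t ht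
    exact norm_ne_zero_iff.1 ht
  refine ⟨fun t => InnerProductSpace.gramSchmidtNormed ℂ (u t), ?_, ?_⟩
  · filter_upwards [hne] with t ht
    refine ⟨fun i => ?_, fun i j hij => ?_⟩
    · simp only [InnerProductSpace.gramSchmidtNormed]
      rw [norm_smul]
      simp [ht i]
    · simp only [InnerProductSpace.gramSchmidtNormed]
      rw [inner_smul_left, inner_smul_right, InnerProductSpace.gramSchmidt_orthogonal ℂ _ hij]
      simp
  · intro k
    have h1 : Tendsto (fun t => InnerProductSpace.gramSchmidtNormed ℂ (u t) k -
        InnerProductSpace.gramSchmidt ℂ (u t) k) l (𝓝 0) := by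
      rw [tendsto_zero_iff_norm_tendsto_zero]
      have h2 : Tendsto (fun t => ‖‖InnerProductSpace.gramSchmidt ℂ (u t) k‖⁻¹ - 1‖ *
        ‖InnerProductSpace.gramSchmidt ℂ (u t) k‖) l (𝓝 (‖(1:ℝ)⁻¹ - 1‖ * 1)) :=
        (((hgn k).inv₀ one_ne_zero).sub_const 1).norm.mul (hgn k)
      simp only [inv_one, sub_self, norm_zero, zero_mul] at h2
      refine h2.congr fun t => ?_
      rw [InnerProductSpace.gramSchmidtNormed]
      generalize InnerProductSpace.gramSchmidt ℂ (u t) k = g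
      have hg2 : ((‖g‖ : ℂ)⁻¹ • g - g) = (((‖g‖⁻¹ - 1 : ℝ)) : ℂ) • g := by
        push_cast
        rw [sub_smul, one_smul]
      refine Eq.trans ?_ (congrArg norm hg2).symm
      rw [norm_smul, Complex.norm_real]
    simpa using h1.add (hg k)

theorem weaklyContains_of_approx {Γ : Type*} [Group Γ]
    {Ha : Type*} [NormedAddCommGroup Ha] [InnerProductSpace ℂ Ha]
    {Hb : Type*} [NormedAddCommGroup Hb] [InnerProductSpace ℂ Hb]
    (β : Γ →* (Hb ≃ₗᵢ[ℂ] Hb)) (α : Γ →* (Ha ≃ₗᵢ[ℂ] Ha))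
    (h : ∀ n : ℕ, ∀ v : Fin n → Ha, Orthonormal ℂ v → ∀ F : Finset Γ, ∀ ε : ℝ, 0 < ε →
      ∃ w : Fin n → Hb, ∀ i j : Fin n, ∀ γ ∈ F,
          ‖(⟪α γ (v i), v j⟫_ℂ) - (⟪β γ (w i), w j⟫_ℂ)‖ < ε) :
    ZimmerWeaklyContains β α := by
  classical
  intro n v hv F ε hε
  choose u hu using fun m : ℕ => h n v hv (insert 1 F) (1 / ((m : ℝ) + 1)) (by positivity)
  have hT : ∀ i j, ∀ γ ∈ insert 1 F,
      Tendsto (fun m => ⟪β γ (u m i), u m j⟫_ℂ) atTop (𝓝 ⟪α γ (v i), v j⟫_ℂ) := by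
    intro i j γ hγ
    rw [tendsto_iff_norm_sub_tendsto_zero]
    refine squeeze_zero (fun _ => norm_nonneg _) (fun m => ?_)
      tendsto_one_div_add_atTop_nhds_zero_nat
    rw [norm_sub_rev]
    exact (hu m i j γ hγ).le
  have h1 : ∀ i j, Tendsto (fun m => ⟪u m i, u m j⟫_ℂ) atTop (𝓝 (if i = j then 1 else 0)) := by
    intro i j
    have := hT i j 1 (Finset.mem_insert_self _ _)
    rw [map_one, map_one] at this
    rw [← orthonormal_iff_ite.1 hv i j]
    exact this
  have hun : ∀ i, Tendsto (fun m => ‖u m i‖) atTop (𝓝 1) := fun i =>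
    tendsto_norm_of_inner_one (by have := h1 i i; rwa [if_pos rfl] at this)
  obtain ⟨w, hw, hwu⟩ := exists_orthonormal_close u h1
  have hw2 : ∀ i j, ∀ γ ∈ F,
      Tendsto (fun m => ⟪β γ (w m i), w m j⟫_ℂ) atTop (𝓝 ⟪α γ (v i), v j⟫_ℂ) := by
    intro i j γ hγ
    have hb : Tendsto (fun m => β γ (w m i - u m i)) atTop (𝓝 0) := by
      have := ((β γ).continuous.tendsto 0).comp (hwu i)
      rw [map_zero] at this
      exact this
    have hbn : Tendsto (fun m => ‖β γ (u m i)‖) atTop (𝓝 1) := by simpa using hun i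
    have := ((tendsto_inner_zero hb (tendsto_norm_of_close (hwu j) (hun j))).add
      (tendsto_inner_zero' (hwu j) hbn)).add (hT i j γ (Finset.mem_insert_of_mem hγ))
    simp only [zero_add] at this
    refine this.congr fun m => ?_
    rw [map_sub, inner_sub_left, inner_sub_right]
    ring
  have hev : ∀ᶠ m in atTop, ∀ i j, ∀ γ ∈ F,
      ‖(⟪α γ (v i), v j⟫_ℂ) - (⟪β γ (w m i), w m j⟫_ℂ)‖ < ε := by
    simp only [eventually_all]
    intro i j
    rw [Filter.eventually_all_finset]
    intro γ hγ
    filter_upwards [(hw2 i j γ hγ).eventually (Metric.ball_mem_nhds _ hε)] with m hm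
    rw [norm_sub_rev, ← dist_eq_norm]
    exact hm
  obtain ⟨m, hm1, hm2⟩ := (hw.and hev).exists
  exact ⟨w m, hm1, hm2⟩

/-- Bounded families of vectors. -/
def bddSub (ι H : Type) [NormedAddCommGroup H] [InnerProductSpace ℂ H] : Submodule ℂ (ι → H) where
  carrier := {f | ∃ C : ℝ, ∀ i, ‖f i‖ ≤ C}
  zero_mem' := ⟨0, fun i => by simp⟩
  add_mem' := by
    rintro f g ⟨C, hC⟩ ⟨D, hD⟩
    exact ⟨C + D, fun i => (norm_add_le _ _).trans (add_le_add (hC i) (hD i))⟩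
  smul_mem' := by
    rintro c f ⟨C, hC⟩
    refine ⟨‖c‖ * C, fun i => ?_⟩
    rw [Pi.smul_apply, norm_smul]
    exact mul_le_mul_of_nonneg_left (hC i) (norm_nonneg _)

theorem tendsto_ultra {ι H : Type} [NormedAddCommGroup H] [InnerProductSpace ℂ H]
    (U : Ultrafilter ι) (x y : bddSub ι H) :
    Tendsto (fun i => ⟪x.1 i, y.1 i⟫_ℂ) U (𝓝 (limUnder (U : Filter ι) fun i => ⟪x.1 i, y.1 i⟫_ℂ)) := by
  apply tendsto_nhds_limUnder
  obtain ⟨x, C, hC⟩ := x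
  obtain ⟨y, D, hD⟩ := y
  have hb : ∀ i, ⟪x i, y i⟫_ℂ ∈ Metric.closedBall (0 : ℂ) (C * D) := by
    intro i
    rw [mem_closedBall_zero_iff]
    exact (norm_inner_le_norm _ _).trans
      (mul_le_mul (hC i) (hD i) (norm_nonneg _) ((norm_nonneg _).trans (hC i)))
  obtain ⟨z, -, hz⟩ := (isCompact_closedBall (0 : ℂ) (C * D)).ultrafilter_le_nhds
    (U.map fun i => ⟪x i, y i⟫_ℂ) (by
      rw [le_principal_iff]
      exact Filter.mem_map.2 (Filter.Eventually.of_forall hb))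
  exact ⟨z, hz⟩

/-- The ultralimit pre-inner product. -/
@[reducible]
noncomputable def ultraCore {ι H : Type} [NormedAddCommGroup H] [InnerProductSpace ℂ H]
    (U : Ultrafilter ι) : PreInnerProductSpace.Core ℂ (bddSub ι H) where
  inner x y := limUnder (U : Filter ι) fun i => ⟪x.1 i, y.1 i⟫_ℂ
  conj_inner_symm x y := by
    refine tendsto_nhds_unique (l := (U : Filter ι)) (f := fun i => ⟪x.1 i, y.1 i⟫_ℂ) ?_
      (tendsto_ultra U x y)
    refine ((Complex.continuous_conj.tendsto _).comp (tendsto_ultra U y x)).congr fun i => ?_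
    exact inner_conj_symm _ _
  re_inner_nonneg x := by
    refine ge_of_tendsto ((Complex.continuous_re.tendsto _).comp (tendsto_ultra U x x))
      (Filter.Eventually.of_forall fun i => ?_)
    exact inner_self_nonneg (𝕜 := ℂ)
  add_left x y z := by
    refine tendsto_nhds_unique (tendsto_ultra U (x + y) z) ?_
    refine ((tendsto_ultra U x z).add (tendsto_ultra U y z)).congr fun i => ?_
    exact (inner_add_left _ _ _).symm
  smul_left x y r := by
    refine tendsto_nhds_unique (tendsto_ultra U (r • x) y) ?_
    refine ((tendsto_ultra U x y).const_mul _).congr fun i => ?_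
    exact (inner_smul_left _ _ _).symm

/-- Pointwise action on bounded families. -/
def bddAct {Γ ι H : Type} [Group Γ] [NormedAddCommGroup H] [InnerProductSpace ℂ H]
    (α : Γ →* (H ≃ₗᵢ[ℂ] H)) : Γ →* (bddSub ι H ≃ₗ[ℂ] bddSub ι H) where
  toFun γ :=
    { toFun := fun f => ⟨fun i => α γ (f.1 i), by
        obtain ⟨f, C, hC⟩ := f
        exact ⟨C, fun i => by simpa using hC i⟩⟩
      invFun := fun f => ⟨fun i => (α γ).symm (f.1 i), by
        obtain ⟨f, C, hC⟩ := f
        exact ⟨C, fun i => by simpa using hC i⟩⟩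
      map_add' := fun f g => by ext i; simp
      map_smul' := fun c f => by ext i; simp
      left_inv := fun f => by ext i; simp
      right_inv := fun f => by ext i; simp }
  map_one' := by ext f i; simp
  map_mul' g h := by ext f i; simp

theorem exists_ultrapower {Γ ι H : Type} [Group Γ] [NormedAddCommGroup H] [InnerProductSpace ℂ H]
    (U : Ultrafilter ι) (α : Γ →* (H ≃ₗᵢ[ℂ] H)) :
    ∃ (β : URep Γ) (j : bddSub ι H →ₗ[ℂ] β.H), DenseRange j ∧
      ∀ γ x y, Tendsto (fun i => ⟪α γ (x.1 i), y.1 i⟫_ℂ) U (𝓝 ⟪β.ρ γ (j x), j y⟫_ℂ) := by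
  obtain ⟨β, j, hd, hj, hρ⟩ := exists_hilbertization (ultraCore U) (bddAct (ι := ι) α) (by
    intro γ x y
    refine tendsto_nhds_unique (tendsto_ultra U _ _) ?_
    refine (tendsto_ultra U x y).congr fun i => ?_
    exact ((α γ).inner_map_map _ _).symm)
  refine ⟨β, j, hd, fun γ x y => ?_⟩
  rw [hρ, hj]
  exact tendsto_ultra U (bddAct α γ x) y

theorem ultrapower_weakly_equivalent {Γ ι H : Type} [Group Γ] [NormedAddCommGroup H]
    [InnerProductSpace ℂ H] (U : Ultrafilter ι) (α : Γ →* (H ≃ₗᵢ[ℂ] H))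
    (β : URep Γ) (j : bddSub ι H →ₗ[ℂ] β.H) (hd : DenseRange j)
    (hj : ∀ γ x y, Tendsto (fun i => ⟪α γ (x.1 i), y.1 i⟫_ℂ) U (𝓝 ⟪β.ρ γ (j x), j y⟫_ℂ)) :
    ZimmerWeaklyEquivalent β.ρ α := by
  constructor
  · apply weaklyContains_of_approx
    intro n v hv F ε hε
    let c : H → bddSub ι H := fun x => ⟨fun _ => x, ‖x‖, fun _ => le_rfl⟩
    refine ⟨fun i => j (c (v i)), fun i k γ hγ => ?_⟩
    have h1 := hj γ (c (v i)) (c (v k))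
    have h2 : Tendsto (fun _ : ι => ⟪α γ (v i), v k⟫_ℂ) U (𝓝 ⟪α γ (v i), v k⟫_ℂ) :=
      tendsto_const_nhds
    rw [tendsto_nhds_unique h2 h1]
    simpa using hε
  · apply weaklyContains_of_approx
    intro n v hv F ε hε
    let O : Set (Fin n → β.H) := ⋂ i, ⋂ k, ⋂ γ ∈ F,
      {y | ‖⟪β.ρ γ (v i), v k⟫_ℂ - ⟪β.ρ γ (y i), y k⟫_ℂ‖ < ε}
    have hO : IsOpen O := by
      refine isOpen_iInter_of_finite fun i => isOpen_iInter_of_finite fun k =>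
        isOpen_biInter_finset fun γ _ => ?_
      refine isOpen_lt ?_ continuous_const
      refine (continuous_const.sub (Continuous.inner ?_ (continuous_apply k))).norm
      exact (β.ρ γ).continuous.comp (continuous_apply i)
    have hne : O.Nonempty := ⟨v, by simp [O, hε]⟩
    have hdd : DenseRange (fun (x : Fin n → bddSub ι H) i => j (x i)) :=
      DenseRange.piMap fun _ => hd
    obtain ⟨x, hx⟩ := hdd.exists_mem_open hO hne
    simp only [O, Set.mem_iInter, Set.mem_ofPred_eq] at hx
    have hev : ∀ᶠ t in (U : Filter ι), ∀ i k, ∀ γ ∈ F,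
        ‖⟪β.ρ γ (v i), v k⟫_ℂ - ⟪α γ ((x i).1 t), (x k).1 t⟫_ℂ‖ < ε := by
      simp only [eventually_all]
      intro i k
      rw [Filter.eventually_all_finset]
      intro γ hγ
      exact (tendsto_const_nhds.sub (hj γ (x i) (x k))).norm.eventually_lt_const (hx i k γ hγ)
    obtain ⟨t, ht⟩ := hev.exists
    exact ⟨fun i => (x i).1 t, ht⟩

theorem exists_approx_map {Γ H : Type} [Group Γ] [NormedAddCommGroup H] [InnerProductSpace ℂ H]
    (α δ : Γ →* (H ≃ₗᵢ[ℂ] H)) (hαδ : ZimmerWeaklyContains α δ)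
    (S : Finset H) (F : Finset Γ) (ε : ℝ) (hε : 0 < ε) :
    ∃ T : H →ₗ[ℂ] H, (∀ x, ‖T x‖ ≤ ‖x‖) ∧ ∀ x ∈ S, ∀ y ∈ S, ∀ γ ∈ F,
      ‖⟪δ γ x, y⟫_ℂ - ⟪α γ (T x), T y⟫_ℂ‖ ≤ ε * (‖x‖ * ‖y‖) := by
  let E : Submodule ℂ H := Submodule.span ℂ (S : Set H)
  have : FiniteDimensional ℂ E := FiniteDimensional.span_finset ℂ S
  let d := Module.finrank ℂ E
  let b : OrthonormalBasis (Fin d) ℂ E := stdOrthonormalBasis ℂ E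
  have hb : Orthonormal ℂ (fun k => (b k : H)) := b.orthonormal.comp_linearIsometry E.subtypeₗᵢ
  obtain ⟨w, hw, hwa⟩ := hαδ d _ hb F (ε / ((d : ℝ) * d + 1)) (by positivity)
  let W0 : E →ₗ[ℂ] H := b.toBasis.constr ℂ w
  have hW0 : ∀ k, W0 (b k) = w k := fun k => by
    have := b.toBasis.constr_basis ℂ w k
    rwa [b.coe_toBasis] at this
  let W : E →ₗᵢ[ℂ] H := W0.isometryOfOrthonormal (v := b.toBasis) (by simp) (by
    have : (W0 ∘ b.toBasis) = w := by ext k; simp [hW0]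
    rw [this]; exact hw)
  have hW : ∀ k, W (b k) = w k := hW0
  refine ⟨W.toLinearMap ∘ₗ (E.orthogonalProjectionOnto : H →L[ℂ] E).toLinearMap, fun x => ?_, ?_⟩
  · simp only [LinearMap.comp_apply, LinearIsometry.coe_toLinearMap, LinearIsometry.norm_map]
    exact E.norm_orthogonalProjectionOnto_apply_le x
  · have main : ∀ (γ : Γ) (hγ : γ ∈ F) (x y : E),
        ‖⟪δ γ (x : H), (y : H)⟫_ℂ - ⟪α γ (W x), W y⟫_ℂ‖ ≤ ε * (‖x‖ * ‖y‖) := by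
      intro γ hγ x y
      have hxr : ∀ x : E, (x : H) = ∑ k, b.repr x k • (b k : H) := fun x => by
        conv_lhs => rw [← b.sum_repr x]
        simp
      have hxW : ∀ x : E, W x = ∑ k, b.repr x k • w k := fun x => by
        conv_lhs => rw [← b.sum_repr x]
        simp [hW]
      have hc : ∀ (x : E) k, ‖b.repr x k‖ ≤ ‖x‖ := fun x k => by
        rw [← b.repr.norm_map x]
        exact PiLp.norm_apply_le _ _
      have e1 : ⟪δ γ (x : H), (y : H)⟫_ℂ - ⟪α γ (W x), W y⟫_ℂ =
          ∑ k, ∑ l, (starRingEnd ℂ (b.repr x k) * b.repr y l) *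
            (⟪δ γ (b k : H), (b l : H)⟫_ℂ - ⟪α γ (w k), w l⟫_ℂ) := by
        rw [hxW x, hxW y]
        conv_lhs => rw [hxr x, hxr y]
        simp only [map_sum, map_smul, sum_inner, inner_sum, inner_smul_left, inner_smul_right,
          Finset.mul_sum, ← Finset.sum_sub_distrib]
        rw [Finset.sum_comm]
        refine Finset.sum_congr rfl fun k _ => Finset.sum_congr rfl fun l _ => ?_
        ring
      rw [e1]
      have e2 : ∀ k l, ‖(starRingEnd ℂ (b.repr x k) * b.repr y l) *
            (⟪δ γ (b k : H), (b l : H)⟫_ℂ - ⟪α γ (w k), w l⟫_ℂ)‖ ≤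
            (‖x‖ * ‖y‖) * (ε / ((d : ℝ) * d + 1)) := by
        intro k l
        rw [norm_mul, norm_mul, RCLike.norm_conj]
        exact mul_le_mul (mul_le_mul (hc x k) (hc y l) (norm_nonneg _) (norm_nonneg _))
          (hwa k l γ hγ).le (norm_nonneg _) (by positivity)
      refine (norm_sum_le_of_le _ fun k _ => norm_sum_le_of_le _ fun l _ => e2 k l).trans ?_
      simp only [Finset.sum_const, Finset.card_univ, Fintype.card_fin, nsmul_eq_mul]
      have h3 : (d : ℝ) * d * (ε / ((d : ℝ) * d + 1)) ≤ ε := by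
        rw [mul_div_assoc', div_le_iff₀ (by positivity)]
        nlinarith
      calc (d : ℝ) * (d * ((‖x‖ * ‖y‖) * (ε / ((d : ℝ) * d + 1))))
          = (d : ℝ) * d * (ε / ((d : ℝ) * d + 1)) * (‖x‖ * ‖y‖) := by ring
        _ ≤ _ := mul_le_mul_of_nonneg_right h3 (by positivity)
    intro x hx y hy γ hγ
    have hx' : x ∈ E := Submodule.subset_span hx
    have hy' : y ∈ E := Submodule.subset_span hy
    have := main γ hγ ⟨x, hx'⟩ ⟨y, hy'⟩
    have px : E.orthogonalProjectionOnto x = ⟨x, hx'⟩ :=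
      E.orthogonalProjectionOnto_mem_subspace_eq_self ⟨x, hx'⟩
    have py : E.orthogonalProjectionOnto y = ⟨y, hy'⟩ :=
      E.orthogonalProjectionOnto_mem_subspace_eq_self ⟨y, hy'⟩
    simpa [px, py] using this

theorem exists_weakly_equivalent_containing_subrepresentation
    {Γ : Type} [Group Γ] [Countable Γ]
    {H : Type} [NormedAddCommGroup H] [InnerProductSpace ℂ H] [CompleteSpace H]
    [TopologicalSpace.SeparableSpace H]
    (α δ : Γ →* (H ≃ₗᵢ[ℂ] H))
    (hαδ : ZimmerWeaklyContains α δ) :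
    ∃ β : URep Γ, ZimmerWeaklyEquivalent β.ρ α ∧
      ∃ K : Submodule ℂ β.H, IsClosed (K : Set β.H) ∧
        (∀ (γ : Γ), ∀ x ∈ K, β.ρ γ x ∈ K) ∧
        ∃ ψ : H ≃ₗᵢ[ℂ] K, ∀ (γ : Γ) (x : H), (ψ (δ γ x) : β.H) = β.ρ γ (ψ x) := by
  classical
  let ι := Finset H × Finset Γ × ℕ
  let U : Ultrafilter ι := Ultrafilter.of atTop
  have hU : (U : Filter ι) ≤ atTop := Ultrafilter.of_le _
  choose T hT1 hT2 using fun i : ι =>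
    exists_approx_map α δ hαδ i.1 i.2.1 (1 / ((i.2.2 : ℝ) + 1)) (by positivity)
  obtain ⟨β, j, hd, hj⟩ := exists_ultrapower U α
  let T' : H →ₗ[ℂ] bddSub ι H :=
    { toFun := fun x => ⟨fun i => T i x, ‖x‖, fun i => hT1 i x⟩
      map_add' := fun x y => by ext i; simp
      map_smul' := fun c x => by ext i; simp }
  have hlim : ∀ γ x y, ⟪β.ρ γ (j (T' x)), j (T' y)⟫_ℂ = ⟪δ γ x, y⟫_ℂ := by
    intro γ x y
    refine tendsto_nhds_unique (hj γ (T' x) (T' y)) ?_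
    refine Tendsto.mono_left ?_ hU
    rw [Metric.tendsto_nhds]
    intro ε hε
    obtain ⟨N, hN⟩ := exists_nat_gt (‖x‖ * ‖y‖ / ε)
    filter_upwards [eventually_ge_atTop (({x, y}, {γ}, N) : ι)] with i hi
    obtain ⟨h1, h2, h3⟩ := hi
    have := hT2 i x (h1 (by simp)) y (h1 (by simp)) γ (h2 (by simp))
    rw [dist_comm, dist_eq_norm]
    refine this.trans_lt ?_
    have h3' : (N : ℝ) ≤ i.2.2 := by exact_mod_cast h3
    rw [one_div_mul_eq_div, div_lt_iff₀ (by positivity)]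
    rw [div_lt_iff₀ hε] at hN
    nlinarith
  have hin : ∀ x y, ⟪j (T' x), j (T' y)⟫_ℂ = ⟪x, y⟫_ℂ := by
    intro x y
    have := hlim 1 x y
    rw [map_one, map_one] at this
    exact this
  let Ψ : H →ₗᵢ[ℂ] β.H := (j ∘ₗ T').isometryOfInner hin
  have hΨ : ∀ γ x, Ψ (δ γ x) = β.ρ γ (Ψ x) := by
    intro γ x
    have h1 : ∀ y, ⟪β.ρ γ (Ψ x), Ψ y⟫_ℂ = ⟪δ γ x, y⟫_ℂ := fun y => hlim γ x y
    have h2 := @norm_sub_sq ℂ _ _ _ _ (β.ρ γ (Ψ x)) (Ψ (δ γ x))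
    rw [h1, inner_self_eq_norm_sq_to_K] at h2
    simp only [LinearIsometryEquiv.norm_map, LinearIsometry.norm_map] at h2
    have h3 : ‖β.ρ γ (Ψ x) - Ψ (δ γ x)‖ ^ 2 = 0 := by
      rw [h2]; norm_cast; ring
    exact (sub_eq_zero.1 (norm_eq_zero.1 (pow_eq_zero_iff two_ne_zero |>.1 h3))).symm
  refine ⟨β, ultrapower_weakly_equivalent U α β j hd hj, LinearMap.range Ψ.toLinearMap, ?_, ?_,
    Ψ.equivRange, fun γ x => hΨ γ x⟩
  · have := Ψ.isometry.isClosedEmbedding.isClosed_range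
    exact this
  · rintro γ _ ⟨x, rfl⟩
    exact ⟨δ γ x, hΨ γ x⟩
end
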